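/- Let ζ = exp(2πi/5). Then (Ramanujan's Lost Notebook mod-5 rank identity) R(ζ;q) = A(q⁵) + (ζ + ζ^{-1} − 2) φ(q⁵) + q B(q⁵) + (ζ + ζ^{-1}) q² C(q⁵) − (ζ + ζ^{-1}) q³ { D(q⁵) − (ζ² + ζ^{-2} − 2) ψ(q⁵)/q⁵ }, where A(q) = (q²,q³,q⁵;q⁵)_∞ / (q,q⁴;q⁵)_∞², B(q) = (q⁵;q⁵)_∞ / (q,q⁴;q⁵)_∞, C(q) = (q⁵;q⁵)_∞ / (q²,q³;q⁵)_∞, D(q) = (q,q⁴,q⁵;q⁵)_∞ / (q²,q³;q⁵)_∞², φ(q) = −1 + Σ_{n≥0} q^{5n²} / ((q;q⁵)_{n+1} (q⁴;q⁵)_n), and ψ(q) = −1 + Σ_{n≥0} q^{5n²} / ((q²;q⁵)_{n+1} (q³;q⁵)_n). -/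

import Mathlib

/-!
Both `φ` and `ψ` are values of the universal mock theta function
`G(z;q) = ∑ q^(n²) / ((z;q)_{n+1} (q/z;q)_n)`, namely of `G(q⁵;q²⁵)` and `G(q¹⁰;q²⁵)` after
`q ↦ q⁵`, and `R(z;q) = (1 - z) G(z;q)` for `|z| = 1`. The last fact (`rankGF_eq_Ehat`) follows by
summing over the largest part of a partition and applying the Rogers–Fine identity.

Clearing the denominator `j(z;q) = (z, q/z; q)_∞` gives a function `Ehat(z;q) = j(z;q) G(z;q)` that
is holomorphic on `ℂ*`, and a telescoping sum gives its functional equation under `z ↦ qz`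
(`Ehat_mul`). Averaging `z G(z;q)` over `z ↦ ζ^j z` produces a function of `z⁵` which, by comparing
functional equations, is `G(q⁵z⁵;q²⁵) - 1` plus two theta quotients (`dissL_eq_dissR`). After
clearing denominators, the difference of the two sides is a theta function of degree `10` with
fifteen zeros, hence zero (`multiplier_zeros`). The zeros come from `Ehat(1;q) = (q;q)_∞` and from
the functional equations.

Both sides of this dissection have a simple pole at `z = 1` and at `z = q`. Comparing the
next coefficients there, that is, differentiating the cleared identity, gives two linear equations
for `R(ζ;q)` and `R(ζ²;q)` in terms of `φ(q⁵)`, `ψ(q⁵)`, infinite products and the logarithmic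
derivatives of `j(·;q²⁵)` at `q⁵` and `q¹⁰` (`rank_relation_one`, `rank_relation_two`). The
logarithmic derivatives are themselves infinite products up to constants (`eulerD_relation_one`,
`eulerD_relation_two`), because of the cubic theta identity `thetaJ_cubic`. Solving the linear
system, with Ramanujan's dissection of `(q;q)_∞` into `t - q - q²/t` (`euler_dissection`) used to
cancel the factor `1 / (q;q)_∞`, yields the theorem for `q ≠ 0`; for `q = 0` both sides are `1`.
-/


/-- The q-Pochhammer symbol `(a;q)_∞ = ∏_{k≥0} (1 - a q^k)`. -/
noncomputable def qPochInf (a q : ℂ) : ℂ := ∏' k : ℕ, (1 - a * q ^ k)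

/-- The finite q-Pochhammer symbol `(a;q)_n = ∏_{k=0}^{n-1} (1 - a q^k)`. -/
noncomputable def qPochN (a q : ℂ) (n : ℕ) : ℂ := ∏ k ∈ Finset.range n, (1 - a * q ^ k)

/-- The Dyson rank of a partition: largest part minus number of parts. -/
noncomputable def partitionRank {n : ℕ} (p : n.Partition) : ℤ :=
  (p.parts.sup : ℤ) - p.parts.card

/-- The rank generating function `R(z;q) = Σ_{n≥0} Σ_m N(m,n) z^m q^n`. -/
noncomputable def rankGF (z q : ℂ) : ℂ :=
  ∑' n : ℕ, (∑ p : n.Partition, z ^ partitionRank p) * q ^ n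

/-- `ζ = exp(2πi/5)`. -/
noncomputable def zeta5 : ℂ := Complex.exp (2 * Real.pi * Complex.I / 5)

/-- `A(q) = (q²,q³,q⁵;q⁵)_∞ / (q,q⁴;q⁵)_∞²`. -/
noncomputable def Aram (q : ℂ) : ℂ :=
  qPochInf (q ^ 2) (q ^ 5) * qPochInf (q ^ 3) (q ^ 5) * qPochInf (q ^ 5) (q ^ 5) /
    (qPochInf q (q ^ 5) * qPochInf (q ^ 4) (q ^ 5)) ^ 2

/-- `B(q) = (q⁵;q⁵)_∞ / (q,q⁴;q⁵)_∞`. -/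
noncomputable def Bram (q : ℂ) : ℂ :=
  qPochInf (q ^ 5) (q ^ 5) / (qPochInf q (q ^ 5) * qPochInf (q ^ 4) (q ^ 5))

/-- `C(q) = (q⁵;q⁵)_∞ / (q²,q³;q⁵)_∞`. -/
noncomputable def Cram (q : ℂ) : ℂ :=
  qPochInf (q ^ 5) (q ^ 5) / (qPochInf (q ^ 2) (q ^ 5) * qPochInf (q ^ 3) (q ^ 5))

/-- `D(q) = (q,q⁴,q⁵;q⁵)_∞ / (q²,q³;q⁵)_∞²`. -/
noncomputable def Dram (q : ℂ) : ℂ :=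
  qPochInf q (q ^ 5) * qPochInf (q ^ 4) (q ^ 5) * qPochInf (q ^ 5) (q ^ 5) /
    (qPochInf (q ^ 2) (q ^ 5) * qPochInf (q ^ 3) (q ^ 5)) ^ 2

/-- `φ(q) = −1 + Σ_{n≥0} q^{5n²} / ((q;q⁵)_{n+1} (q⁴;q⁵)_n)`. -/
noncomputable def phiRam (q : ℂ) : ℂ :=
  -1 + ∑' n : ℕ, q ^ (5 * n ^ 2) / (qPochN q (q ^ 5) (n + 1) * qPochN (q ^ 4) (q ^ 5) n)

/-- `ψ(q) = −1 + Σ_{n≥0} q^{5n²} / ((q²;q⁵)_{n+1} (q³;q⁵)_n)`. -/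
noncomputable def psiRam (q : ℂ) : ℂ :=
  -1 + ∑' n : ℕ, q ^ (5 * n ^ 2) / (qPochN (q ^ 2) (q ^ 5) (n + 1) * qPochN (q ^ 3) (q ^ 5) n)

open Filter Topology

/-! ### Infinite products -/

lemma norm_mul_pow_summable {q : ℂ} (hq : ‖q‖ < 1) (a : ℂ) :
    Summable fun k : ℕ => ‖-(a * q ^ k)‖ := by
  simpa [norm_mul, norm_pow] using
    (summable_geometric_of_lt_one (norm_nonneg _) hq).mul_left ‖a‖

lemma qPoch_multipliable {q : ℂ} (hq : ‖q‖ < 1) (a : ℂ) :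
    Multipliable fun k : ℕ => 1 - a * q ^ k := by
  simpa [sub_eq_add_neg] using multipliable_one_add_of_summable (norm_mul_pow_summable hq a)

lemma qPochInf_step {q : ℂ} (hq : ‖q‖ < 1) (a : ℂ) :
    qPochInf a q = (1 - a) * qPochInf (a * q) q := by
  unfold qPochInf
  rw [tprod_eq_zero_mul']
  · simp only [pow_zero, mul_one, pow_succ', mul_assoc]
  · simpa only [pow_succ', mul_assoc] using qPoch_multipliable hq (a * q)

lemma qPochN_succ (a q : ℂ) (n : ℕ) : qPochN a q (n + 1) = qPochN a q n * (1 - a * q ^ n) := by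
  simp [qPochN, Finset.prod_range_succ]

lemma qPochN_succ' (a q : ℂ) (n : ℕ) : qPochN a q (n + 1) = (1 - a) * qPochN (a * q) q n := by
  simp only [qPochN, Finset.prod_range_succ', pow_zero, mul_one, pow_succ', mul_assoc]
  ring

lemma qPochInf_eq_mul {q : ℂ} (hq : ‖q‖ < 1) (a : ℂ) (n : ℕ) :
    qPochInf a q = qPochN a q n * qPochInf (a * q ^ n) q := by
  induction n with
  | zero => simp [qPochN]
  | succ n ih =>
    rw [ih, qPochN_succ, qPochInf_step hq (a * q ^ n), pow_succ]; ring_nf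

lemma qPochInf_zero_left (q : ℂ) : qPochInf 0 q = 1 := by simp [qPochInf]

lemma qPochInf_ne_zero {q a : ℂ} (hq : ‖q‖ < 1) (h : ∀ k : ℕ, a * q ^ k ≠ 1) :
    qPochInf a q ≠ 0 := by
  have := tprod_one_add_ne_zero_of_summable (f := fun k : ℕ => -(a * q ^ k))
    (fun k => by rw [← sub_eq_add_neg, sub_ne_zero]; exact (h k).symm)
    (norm_mul_pow_summable hq a)
  simpa [qPochInf, sub_eq_add_neg] using this

lemma qPochInf_eq_zero {q a : ℂ} (hq : ‖q‖ < 1) {k : ℕ} (h : a * q ^ k = 1) :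
    qPochInf a q = 0 := by
  rw [qPochInf_eq_mul hq a (k + 1), qPochN_succ, h]; simp

lemma qPochInf_ne_zero_of_norm {q a : ℂ} (hq : ‖q‖ < 1) (h : ‖a‖ < 1) : qPochInf a q ≠ 0 := by
  refine qPochInf_ne_zero hq fun k hk => ?_
  have : ‖a * q ^ k‖ < 1 := by
    rw [norm_mul, norm_pow]
    exact mul_lt_one_of_nonneg_of_lt_one_left (norm_nonneg _) h
      (pow_le_one₀ (norm_nonneg _) hq.le)
  rw [hk] at this; simp at this

lemma qPochN_ne_zero {q a : ℂ} {n : ℕ} (h : ∀ k : ℕ, a * q ^ k ≠ 1) : qPochN a q n ≠ 0 := by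
  rw [qPochN, Finset.prod_ne_zero_iff]
  exact fun k _ => sub_ne_zero.2 (h k).symm

lemma norm_qPochN_le {q : ℂ} (hq : ‖q‖ < 1) (a : ℂ) (n : ℕ) :
    ‖qPochN a q n‖ ≤ Real.exp (‖a‖ / (1 - ‖q‖)) := by
  unfold qPochN
  have h1 : ∀ k ∈ Finset.range n, ‖1 - a * q ^ k‖ ≤ Real.exp (‖a‖ * ‖q‖ ^ k) := fun k _ => by
    calc ‖1 - a * q ^ k‖ ≤ ‖(1 : ℂ)‖ + ‖a * q ^ k‖ := norm_sub_le _ _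
      _ = ‖a‖ * ‖q‖ ^ k + 1 := by simp [norm_pow, add_comm]
      _ ≤ _ := Real.add_one_le_exp _
  rw [norm_prod]
  refine (Finset.prod_le_prod (fun _ _ => norm_nonneg _) h1).trans ?_
  rw [← Real.exp_sum, ← Finset.mul_sum, div_eq_mul_inv]
  refine Real.exp_le_exp.2 (mul_le_mul_of_nonneg_left ?_ (norm_nonneg _))
  rw [← tsum_geometric_of_lt_one (norm_nonneg _) hq]
  exact (summable_geometric_of_lt_one (norm_nonneg _) hq).sum_le_tsum _
    (fun _ _ => by positivity)

lemma qPochN_tendsto {q : ℂ} (hq : ‖q‖ < 1) (a : ℂ) :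
    Tendsto (fun n => qPochN a q n) atTop (𝓝 (qPochInf a q)) :=
  (qPoch_multipliable hq a).hasProd.tendsto_prod_nat

lemma norm_qPochInf_le {q : ℂ} (hq : ‖q‖ < 1) (a : ℂ) :
    ‖qPochInf a q‖ ≤ Real.exp (‖a‖ / (1 - ‖q‖)) :=
  le_of_tendsto (qPochN_tendsto hq a).norm (Eventually.of_forall fun n => norm_qPochN_le hq a n)

lemma differentiable_qPochInf {q : ℂ} (hq : ‖q‖ < 1) :
    Differentiable ℂ fun a => qPochInf a q := by
  have key : ∀ r : ℝ, DifferentiableOn ℂ (fun a => qPochInf a q) (Metric.ball 0 r) := fun r => by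
    have h := Summable.hasProdLocallyUniformlyOn_nat_one_add (R := ℂ) (α := ℂ)
      (f := fun k a => -(a * q ^ k)) (K := Metric.ball 0 r) (u := fun k => |r| * ‖q‖ ^ k)
      Metric.isOpen_ball
      ((summable_geometric_of_lt_one (norm_nonneg _) hq).mul_left _)
      (.of_forall fun k a ha => by
        rw [norm_neg, norm_mul, norm_pow]
        refine mul_le_mul_of_nonneg_right ?_ (by positivity)
        rw [mem_ball_zero_iff] at ha
        exact ha.le.trans (le_abs_self r))
      (fun k => by fun_prop)
    have := h.differentiableOn (.of_forall fun _ ↦ by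
      simpa [Finset.prod_fn] using DifferentiableOn.finsetProd (fun _ _ ↦ by fun_prop))
      Metric.isOpen_ball
    simpa [qPochInf, sub_eq_add_neg] using this
  intro a
  exact (key (‖a‖ + 1)).differentiableAt (Metric.isOpen_ball.mem_nhds (by simp))

lemma qPochN_five_mul (a q : ℂ) (n : ℕ) : qPochN a q (5 * n) =
    qPochN a (q ^ 5) n * qPochN (a * q) (q ^ 5) n * qPochN (a * q ^ 2) (q ^ 5) n *
      qPochN (a * q ^ 3) (q ^ 5) n * qPochN (a * q ^ 4) (q ^ 5) n := by
  induction n with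
  | zero => simp [qPochN]
  | succ n ih =>
    rw [show 5 * (n + 1) = 5 * n + 1 + 1 + 1 + 1 + 1 by ring]
    simp only [qPochN_succ, ih]
    ring

/-- Splitting the factors of `(a;q)_∞` according to the exponent modulo `5`. -/
lemma qPochInf_five {q : ℂ} (hq : ‖q‖ < 1) (a : ℂ) : qPochInf a q =
    qPochInf a (q ^ 5) * qPochInf (a * q) (q ^ 5) * qPochInf (a * q ^ 2) (q ^ 5) *
      qPochInf (a * q ^ 3) (q ^ 5) * qPochInf (a * q ^ 4) (q ^ 5) := by
  have hq5 : ‖q ^ 5‖ < 1 := by rw [norm_pow]; exact pow_lt_one₀ (norm_nonneg _) hq (by norm_num)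
  have h1 := (qPochN_tendsto hq a).comp (tendsto_id.const_mul_atTop' (show 0 < 5 by norm_num))
  have h2 := ((((qPochN_tendsto hq5 a).mul (qPochN_tendsto hq5 (a * q))).mul
    (qPochN_tendsto hq5 (a * q ^ 2))).mul (qPochN_tendsto hq5 (a * q ^ 3))).mul
    (qPochN_tendsto hq5 (a * q ^ 4))
  refine tendsto_nhds_unique h1 (h2.congr fun n => ?_)
  simp [Function.comp, qPochN_five_mul]

/-- `∏_j (ζ^j a; q)_∞ = (a⁵; q⁵)_∞` for a primitive fifth root of unity `ζ`. -/
lemma qPochInf_root {q ζ : ℂ} (hq : ‖q‖ < 1) (hζ : 1 + ζ + ζ ^ 2 + ζ ^ 3 + ζ ^ 4 = 0) (a : ℂ) :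
    qPochInf a q * qPochInf (ζ * a) q * qPochInf (ζ ^ 2 * a) q * qPochInf (ζ ^ 3 * a) q *
      qPochInf (ζ ^ 4 * a) q = qPochInf (a ^ 5) (q ^ 5) := by
  have hq5 : ‖q ^ 5‖ < 1 := by rw [norm_pow]; exact pow_lt_one₀ (norm_nonneg _) hq (by norm_num)
  have h2 := ((((qPochN_tendsto hq a).mul (qPochN_tendsto hq (ζ * a))).mul
    (qPochN_tendsto hq (ζ ^ 2 * a))).mul (qPochN_tendsto hq (ζ ^ 3 * a))).mul
    (qPochN_tendsto hq (ζ ^ 4 * a))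
  refine tendsto_nhds_unique h2 ((qPochN_tendsto hq5 (a ^ 5)).congr fun n => ?_)
  have h5 : ∀ y : ℂ, 1 - y ^ 5 =
      (1 - y) * (1 - ζ * y) * (1 - ζ ^ 2 * y) * (1 - ζ ^ 3 * y) * (1 - ζ ^ 4 * y) := fun y => by
    have e4 : ζ ^ 4 = -(1 + ζ + ζ ^ 2 + ζ ^ 3) := by linear_combination hζ
    have e5 : ζ ^ 5 = 1 := by linear_combination (ζ - 1) * hζ
    have e6 : ζ ^ 6 = ζ := by linear_combination ζ * e5
    have e7 : ζ ^ 7 = ζ ^ 2 := by linear_combination ζ ^ 2 * e5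
    have e8 : ζ ^ 8 = ζ ^ 3 := by linear_combination ζ ^ 3 * e5
    have e9 : ζ ^ 9 = ζ ^ 4 := by linear_combination ζ ^ 4 * e5
    have e10 : ζ ^ 10 = 1 := by linear_combination (ζ ^ 5 + 1) * e5
    ring_nf
    simp only [e5, e6, e7, e8, e9, e10]
    simp only [e4]
    ring
  simp only [qPochN]
  rw [← Finset.prod_mul_distrib, ← Finset.prod_mul_distrib, ← Finset.prod_mul_distrib,
    ← Finset.prod_mul_distrib]
  refine Finset.prod_congr rfl fun k _ => ?_
  rw [show a ^ 5 * (q ^ 5) ^ k = (a * q ^ k) ^ 5 by ring, h5]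
  ring

/-! ### The theta function -/

/-- The theta function `j(x;q) = (x, q/x; q)_∞`, without the factor `(q;q)_∞`. -/
noncomputable def thetaJ (x q : ℂ) : ℂ := qPochInf x q * qPochInf (q / x) q

/-- The cofactor of `1 - x` in `j(x;q)`. -/
noncomputable def thetaJ0 (x q : ℂ) : ℂ := qPochInf (x * q) q * qPochInf (q / x) q

section Theta
variable {q : ℂ}

lemma thetaJ_eq (hq : ‖q‖ < 1) (x : ℂ) : thetaJ x q = (1 - x) * thetaJ0 x q := by
  rw [thetaJ, thetaJ0, qPochInf_step hq x]; ring

lemma thetaJ0_inv (x : ℂ) : thetaJ0 x⁻¹ q = thetaJ0 x q := by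
  simp only [thetaJ0, div_eq_mul_inv, inv_inv]
  rw [mul_comm, mul_comm x q, mul_comm q x⁻¹]

lemma thetaJ0_one : thetaJ0 1 q = qPochInf q q ^ 2 := by simp [thetaJ0, sq]

lemma thetaJ_inv (hq : ‖q‖ < 1) {x : ℂ} (hx : x ≠ 0) : thetaJ x⁻¹ q = -x⁻¹ * thetaJ x q := by
  rw [thetaJ_eq hq, thetaJ_eq hq, thetaJ0_inv]; field_simp; ring

lemma thetaJ_q_div (hq0 : q ≠ 0) (x : ℂ) : thetaJ (q / x) q = thetaJ x q := by
  rw [thetaJ, thetaJ, div_div_cancel₀ hq0, mul_comm]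

lemma thetaJ_mul (hq : ‖q‖ < 1) (hq0 : q ≠ 0) {x : ℂ} (hx : x ≠ 0) :
    thetaJ (q * x) q = -x⁻¹ * thetaJ x q := by
  rw [← thetaJ_inv hq hx, ← thetaJ_q_div hq0 x⁻¹]; simp

lemma thetaJ_one (hq : ‖q‖ < 1) : thetaJ 1 q = 0 := by simp [thetaJ_eq hq]

/-- Quasi-periodicity of the theta function under integral powers of `q`. -/
lemma thetaJ_zpow (hq : ‖q‖ < 1) (hq0 : q ≠ 0) (n : ℤ) :
    ∃ c : ℂ, c ≠ 0 ∧ ∀ x : ℂ, x ≠ 0 → thetaJ (q ^ n * x) q = c * x ^ (-n) * thetaJ x q := by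
  induction n using Int.induction_on with
  | zero => exact ⟨1, one_ne_zero, fun x _ => by simp⟩
  | succ n ih =>
    obtain ⟨c, hc, h⟩ := ih
    refine ⟨-c * (q ^ (n : ℤ))⁻¹, by simp [hc, hq0], fun x hx => ?_⟩
    have hqn : q ^ (n : ℤ) ≠ 0 := zpow_ne_zero _ hq0
    rw [zpow_add_one₀ hq0, mul_comm _ q, mul_assoc, thetaJ_mul hq hq0 (mul_ne_zero hqn hx), h x hx,
      neg_add, zpow_add₀ hx, zpow_neg_one, mul_inv]
    ring
  | pred n ih =>
    obtain ⟨c, hc, h⟩ := ih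
    refine ⟨-c * q ^ (-(n : ℤ) - 1), mul_ne_zero (neg_ne_zero.2 hc) (zpow_ne_zero _ hq0),
      fun x hx => ?_⟩
    have hqn : q ^ (-(n : ℤ) - 1) * x ≠ 0 := mul_ne_zero (zpow_ne_zero _ hq0) hx
    have h1 := thetaJ_mul hq hq0 hqn
    rw [← mul_assoc, ← zpow_one_add₀ hq0, show 1 + (-(n : ℤ) - 1) = -n by ring, h x hx] at h1
    rw [show -(-(n : ℤ) - 1) = -(-(n : ℤ)) + 1 by ring, zpow_add₀ hx, zpow_one]
    have h2 : thetaJ (q ^ (-(n : ℤ) - 1) * x) q =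
        -(q ^ (-(n : ℤ) - 1) * x) * (-(q ^ (-(n : ℤ) - 1) * x)⁻¹ *
          thetaJ (q ^ (-(n : ℤ) - 1) * x) q) := by field_simp
    rw [h2, ← h1]; ring

lemma thetaJ_eq_zero_iff (hq : ‖q‖ < 1) (hq0 : q ≠ 0) {x : ℂ} (hx : x ≠ 0) :
    thetaJ x q = 0 ↔ ∃ n : ℤ, x = q ^ n := by
  constructor
  · intro h
    by_contra! hne
    refine mul_ne_zero (qPochInf_ne_zero hq fun k hk => ?_) (qPochInf_ne_zero hq fun k hk => ?_) h
    · refine hne (-k) ?_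
      rw [zpow_neg, zpow_natCast]; exact eq_inv_of_mul_eq_one_left hk
    · refine hne (k + 1) ?_
      rw [zpow_add_one₀ hq0, zpow_natCast]
      field_simp at hk
      rw [← hk, mul_comm]
  · rintro ⟨n, rfl⟩
    obtain ⟨c, -, h⟩ := thetaJ_zpow hq hq0 n
    have := h 1 one_ne_zero
    rwa [mul_one, thetaJ_one hq, mul_zero] at this

lemma differentiableAt_thetaJ (hq : ‖q‖ < 1) {x : ℂ} (hx : x ≠ 0) :
    DifferentiableAt ℂ (fun x => thetaJ x q) x := by
  have h := differentiable_qPochInf hq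
  unfold thetaJ
  exact (h x).mul ((h (q / x)).comp x (by fun_prop (disch := exact hx)))

lemma differentiableAt_thetaJ0 (hq : ‖q‖ < 1) {x : ℂ} (hx : x ≠ 0) :
    DifferentiableAt ℂ (fun x => thetaJ0 x q) x := by
  have h := differentiable_qPochInf hq
  unfold thetaJ0
  have h1 : DifferentiableAt ℂ (fun x => qPochInf (x * q) q) x :=
    (h (x * q)).comp x (f := fun x => x * q) (by fun_prop)
  exact h1.mul ((h (q / x)).comp x (f := fun x => q / x) (by fun_prop (disch := exact hx)))

lemma hasDerivAt_thetaJ_one (hq : ‖q‖ < 1) :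
    HasDerivAt (fun x => thetaJ x q) (-qPochInf q q ^ 2) 1 := by
  have h := ((hasDerivAt_id (1 : ℂ)).const_sub 1).mul
    (differentiableAt_thetaJ0 hq one_ne_zero).hasDerivAt
  have e : (fun x => thetaJ x q) = (fun x : ℂ => (1 - id x)) * fun x => thetaJ0 x q := by
    ext x; simp [thetaJ_eq hq]
  rw [e]
  refine h.congr_deriv ?_
  simp [thetaJ0_one]

lemma qPochInf_self_ne_zero (hq : ‖q‖ < 1) : qPochInf q q ≠ 0 := qPochInf_ne_zero_of_norm hq hq

/-- All zeros of the theta function are simple. -/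
lemma deriv_thetaJ_ne_zero (hq : ‖q‖ < 1) (hq0 : q ≠ 0) (n : ℤ) :
    deriv (fun x => thetaJ x q) (q ^ n) ≠ 0 := by
  obtain ⟨c, hc, h⟩ := thetaJ_zpow hq hq0 n
  have hqn : q ^ n ≠ 0 := zpow_ne_zero _ hq0
  have h1 : HasDerivAt (fun x => thetaJ (q ^ n * x) q)
      (deriv (fun x => thetaJ x q) (q ^ n) * q ^ n) 1 := by
    have h3 : HasDerivAt (fun x => thetaJ x q) (deriv (fun x => thetaJ x q) (q ^ n))
        (q ^ n * 1) := by
      rw [mul_one]; exact (differentiableAt_thetaJ hq hqn).hasDerivAt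
    have h4 : HasDerivAt (fun x : ℂ => q ^ n * x) (q ^ n) 1 := by
      simpa using (hasDerivAt_id (1 : ℂ)).const_mul (q ^ n)
    exact h3.comp 1 h4
  have h2 : HasDerivAt (fun x => thetaJ (q ^ n * x) q)
      (c * (-qPochInf q q ^ 2)) 1 := by
    have h3 := (((hasDerivAt_zpow (-n) (1 : ℂ) (Or.inl one_ne_zero)).const_mul c).mul
      (hasDerivAt_thetaJ_one hq))
    simp only [thetaJ_one hq, one_zpow, mul_zero, zero_add, mul_one] at h3
    refine h3.congr_of_eventuallyEq ?_
    filter_upwards [isOpen_ne.mem_nhds (one_ne_zero (α := ℂ))] with x hx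
    exact h x hx
  intro h0
  rw [h0, zero_mul] at h1
  have := h1.unique h2
  exact mul_ne_zero hc (neg_ne_zero.2 (pow_ne_zero 2 (qPochInf_self_ne_zero hq))) this.symm

end Theta

/-! ### Holomorphic functions on the punctured plane with a multiplier -/

/-- Continuous functions on `ℂ*` which agree off a countable set are equal. -/
lemma eq_of_eq_off_countable {f g : ℂ → ℂ} (hf : ContinuousOn f {0}ᶜ) (hg : ContinuousOn g {0}ᶜ)
    {C : Set ℂ} (hC : C.Countable) (h : ∀ x, x ≠ 0 → x ∉ C → f x = g x) {x : ℂ} (hx : x ≠ 0) :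
    f x = g x := by
  have hd : Dense ((insert 0 C)ᶜ : Set ℂ) := (hC.insert 0).dense_compl ℝ
  refine Set.EqOn.of_subset_closure (s := (insert 0 C)ᶜ) (t := {0}ᶜ) (fun y hy => ?_) hf hg
    (fun y hy => ?_) (by rw [hd.closure_eq]; exact Set.subset_univ _) hx
  · simp only [Set.mem_compl_iff, Set.mem_insert_iff, not_or] at hy
    exact h y hy.1 hy.2
  · simp only [Set.mem_compl_iff, Set.mem_insert_iff, not_or] at hy
    exact hy.1

section Multiplier
variable {q : ℂ}

/-- A holomorphic function on `ℂ*` invariant under `x ↦ q x` is constant: it descends to the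
compact torus `ℂ*/q^ℤ`. -/
lemma elliptic_const (hq : ‖q‖ < 1) (hq0 : q ≠ 0) {H : ℂ → ℂ} (hH : DifferentiableOn ℂ H {0}ᶜ)
    (hper : ∀ x, x ≠ 0 → H (q * x) = H x) {x y : ℂ} (hx : x ≠ 0) (hy : y ≠ 0) : H x = H y := by
  have hqn : 0 < ‖q‖ := norm_pos_iff.2 hq0
  have hz : ∀ (n : ℤ) (x : ℂ), x ≠ 0 → H (q ^ n * x) = H x := by
    intro n
    induction n using Int.induction_on with
    | zero => simp
    | succ n ih =>
      intro x hx
      rw [zpow_add_one₀ hq0, mul_assoc, ih _ (mul_ne_zero hq0 hx), hper x hx]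
    | pred n ih =>
      intro x hx
      rw [← hper _ (mul_ne_zero (zpow_ne_zero _ hq0) hx), ← mul_assoc, ← zpow_one_add₀ hq0,
        show 1 + (-(n : ℤ) - 1) = -n by ring, ih x hx]
  have hK : IsCompact (Metric.closedBall (0 : ℂ) 1 ∩ {x | ‖q‖ ≤ ‖x‖}) :=
    (isCompact_closedBall _ _).inter_right (isClosed_le continuous_const continuous_norm)
  have hKsub : Metric.closedBall (0 : ℂ) 1 ∩ {x | ‖q‖ ≤ ‖x‖} ⊆ {0}ᶜ := by
    rintro x ⟨-, hx⟩ rfl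
    simp at hx; exact hq0 hx
  obtain ⟨C, hC⟩ := hK.exists_bound_of_continuousOn (hH.continuousOn.mono hKsub)
  have hb : ∀ x, x ≠ 0 → ‖H x‖ ≤ C := by
    intro x hx
    obtain ⟨n, h1, h2⟩ := exists_mem_Ico_zpow (norm_pos_iff.2 hx) ((one_lt_inv₀ hqn).2 hq)
    rw [← hz (n + 1) x hx]
    refine hC _ ⟨?_, ?_⟩
    · rw [mem_closedBall_zero_iff, norm_mul, norm_zpow]
      rw [inv_zpow, lt_inv_comm₀ (by positivity) (by positivity)] at h2
      calc ‖q‖ ^ (n + 1) * ‖x‖ ≤ ‖x‖⁻¹ * ‖x‖ := by gcongr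
        _ = 1 := inv_mul_cancel₀ (by positivity)
    · rw [Set.mem_ofPred_eq, norm_mul, norm_zpow, zpow_add_one₀ hqn.ne']
      rw [inv_zpow] at h1
      calc ‖q‖ = ‖q‖ ^ n * ‖q‖ * (‖q‖ ^ n)⁻¹ := by field_simp
        _ ≤ _ := by gcongr
  have hF : Differentiable ℂ fun w => H (Complex.exp w) := fun w =>
    (hH.differentiableAt (isOpen_compl_singleton.mem_nhds (Complex.exp_ne_zero w))).comp w
      Complex.differentiableAt_exp
  have hbd : Bornology.IsBounded (Set.range fun w => H (Complex.exp w)) := by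
    rw [isBounded_iff_forall_norm_le]
    exact ⟨C, by rintro _ ⟨w, rfl⟩; exact hb _ (Complex.exp_ne_zero w)⟩
  have := hF.apply_eq_apply_of_bounded hbd (Complex.log x) (Complex.log y)
  simpa [Complex.exp_log hx, Complex.exp_log hy] using this

lemma countable_zeros (a q : ℂ) : {x : ℂ | ∃ n : ℤ, x = a * q ^ n}.Countable := by
  have : {x : ℂ | ∃ n : ℤ, x = a * q ^ n} = Set.range fun n : ℤ => a * q ^ n := by
    ext x; simp [eq_comm]
  rw [this]; exact Set.countable_range _

lemma thetaJ_div_ne_zero (hq : ‖q‖ < 1) (hq0 : q ≠ 0) {a x : ℂ} (ha : a ≠ 0) (hx : x ≠ 0)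
    (h : ¬ ∃ n : ℤ, x = a * q ^ n) : thetaJ (x / a) q ≠ 0 := by
  rw [Ne, thetaJ_eq_zero_iff hq hq0 (div_ne_zero hx ha)]
  rintro ⟨n, hn⟩
  exact h ⟨n, by rw [← hn]; field_simp⟩

lemma differentiableOn_thetaJ_div (hq : ‖q‖ < 1) {a : ℂ} (ha : a ≠ 0) :
    DifferentiableOn ℂ (fun x => thetaJ (x / a) q) {0}ᶜ := fun x hx =>
  (DifferentiableAt.comp (g := fun x => thetaJ x q) (f := fun x => x / a) x
    (differentiableAt_thetaJ hq (div_ne_zero hx ha)) (by fun_prop)).differentiableWithinAt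

/-- A holomorphic function on `ℂ*` whose multiplier has negative degree vanishes. -/
lemma multiplier_neg (hq : ‖q‖ < 1) (hq0 : q ≠ 0) {h : ℂ → ℂ} (hh : DifferentiableOn ℂ h {0}ᶜ)
    {d : ℕ} (hd : d ≠ 0) {c : ℂ} (hc : c ≠ 0)
    (hper : ∀ x, x ≠ 0 → h (q * x) = c * x ^ d * h x) {x : ℂ} (hx : x ≠ 0) : h x = 0 := by
  -- Multiplying by `j(x/y)^d` for a suitable `y` makes the multiplier trivial.
  obtain ⟨y, hy⟩ := IsAlgClosed.exists_pow_nat_eq ((-1) ^ d * c⁻¹) (Nat.pos_of_ne_zero hd)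
  have hy0 : y ≠ 0 := by
    rintro rfl
    rw [zero_pow hd] at hy
    exact mul_ne_zero (pow_ne_zero _ (by norm_num)) (inv_ne_zero hc) hy.symm
  have hθ := differentiableOn_thetaJ_div hq hy0
  have hconst : ∀ x, x ≠ 0 → h x * thetaJ (x / y) q ^ d = 0 := fun x hx => by
    have := elliptic_const hq hq0 (H := fun x => h x * thetaJ (x / y) q ^ d) (hh.mul (hθ.pow d))
      (fun x hx => by
        rw [hper x hx, mul_div_assoc, thetaJ_mul hq hq0 (div_ne_zero hx hy0), mul_pow, inv_div,
          neg_pow, div_pow, hy]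
        have : ((-1 : ℂ) ^ d) * (-1) ^ d = 1 := by rw [← mul_pow]; simp
        field_simp
        linear_combination (h x * thetaJ (x / y) q ^ d) * this) hx hy0
    simpa [div_self hy0, thetaJ_one hq, hd] using this
  refine eq_of_eq_off_countable hh.continuousOn (continuousOn_const (c := 0))
    (countable_zeros y q) (fun x hx hxC => ?_) hx
  exact (mul_eq_zero.1 (hconst x hx)).resolve_right
    (pow_ne_zero _ (thetaJ_div_ne_zero hq hq0 hy0 hx hxC))

/-- If `t` has only simple zeros in the open set `U` and `f` vanishes at them, then `f / t` extends
holomorphically to `U`. -/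
lemma exists_quotient {U : Set ℂ} (hU : IsOpen U) {f t : ℂ → ℂ} (hf : DifferentiableOn ℂ f U)
    (ht : DifferentiableOn ℂ t U) (hsimple : ∀ a ∈ U, t a = 0 → deriv t a ≠ 0)
    (hzero : ∀ a ∈ U, t a = 0 → f a = 0) :
    ∃ g : ℂ → ℂ, DifferentiableOn ℂ g U ∧ ∀ x ∈ U, f x = t x * g x := by
  classical
  refine ⟨fun x => if t x = 0 then deriv f x / deriv t x else f x / t x, fun a ha => ?_,
    fun x hx => ?_⟩
  · have hnU : U ∈ 𝓝 a := hU.mem_nhds ha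
    refine DifferentiableAt.differentiableWithinAt ?_
    by_cases h0 : t a = 0
    · have hdf := ((Complex.differentiableOn_dslope hnU).2 hf).differentiableAt hnU
      have hdt := ((Complex.differentiableOn_dslope hnU).2 ht).differentiableAt hnU
      have hne : dslope t a a ≠ 0 := by rw [dslope_same]; exact hsimple a ha h0
      refine (hdf.div hdt hne).congr_of_eventuallyEq ?_
      filter_upwards [hdt.continuousAt.eventually_ne hne] with x hx
      by_cases hxa : x = a
      · subst hxa; simp [h0]
      · have hxa' : x - a ≠ 0 := sub_ne_zero.2 hxa
        have ht' : t x = (x - a) * dslope t a x := by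
          have := sub_smul_dslope t a x
          simpa [h0] using this.symm
        have hf' : f x = (x - a) * dslope f a x := by
          have := sub_smul_dslope f a x
          simpa [hzero a ha h0] using this.symm
        have : t x ≠ 0 := by rw [ht']; exact mul_ne_zero hxa' hx
        simp only [this, if_false, Pi.div_apply]
        rw [ht', hf', mul_div_mul_left _ _ hxa']
    · have ht' := ht.differentiableAt hnU
      refine ((hf.differentiableAt hnU).div ht' h0).congr_of_eventuallyEq ?_
      filter_upwards [ht'.continuousAt.eventually_ne h0] with x hx
      simp [hx]
  · by_cases h0 : t x = 0
    · simp [h0, hzero x hx h0]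
    · simp only [h0, if_false]; field_simp

/-- A theta function of degree `k` on `ℂ*` with more than `k` zeros which are distinct modulo
`q^ℤ` vanishes identically. -/
lemma multiplier_zeros (hq : ‖q‖ < 1) (hq0 : q ≠ 0) (S : Finset ℂ) :
    (∀ a ∈ S, a ≠ 0) → (∀ a ∈ S, ∀ b ∈ S, ∀ n : ℤ, a = b * q ^ n → a = b) →
    ∀ {f : ℂ → ℂ}, DifferentiableOn ℂ f {0}ᶜ → ∀ {k : ℤ}, k < S.card → ∀ {c : ℂ}, c ≠ 0 →
    (∀ x, x ≠ 0 → f (q * x) = c * x ^ (-k) * f x) → (∀ a ∈ S, f a = 0) →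
    ∀ {x : ℂ}, x ≠ 0 → f x = 0 := by
  classical
  induction S using Finset.induction_on with
  | empty =>
    intro _ _ f hf k hk c hc hper _ x hx
    obtain ⟨d, hd⟩ : ∃ d : ℕ, -k = d := ⟨(-k).toNat, by simp at hk; omega⟩
    refine multiplier_neg hq hq0 hf (d := d) (by simp at hk; omega) hc (fun x hx => ?_) hx
    rw [hper x hx, hd, zpow_natCast]
  | insert a S haS ih =>
    intro hS0 hS f hf k hk c hc hper hzero x hx
    have ha0 : a ≠ 0 := hS0 a (Finset.mem_insert_self _ _)
    have hθ := differentiableOn_thetaJ_div hq ha0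
    have hfz : ∀ n : ℤ, f (a * q ^ n) = 0 := by
      intro n
      induction n using Int.induction_on with
      | zero => simpa using hzero a (Finset.mem_insert_self _ _)
      | succ n ihn =>
        rw [zpow_add_one₀ hq0, ← mul_assoc, mul_comm,
          hper _ (mul_ne_zero ha0 (zpow_ne_zero _ hq0)), ihn, mul_zero]
      | pred n ihn =>
        have hne : a * q ^ (-(n : ℤ) - 1) ≠ 0 := mul_ne_zero ha0 (zpow_ne_zero _ hq0)
        have := hper _ hne
        rw [show q * (a * q ^ (-(n : ℤ) - 1)) = a * q ^ (-(n : ℤ)) by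
          rw [mul_left_comm, ← zpow_one_add₀ hq0]; congr 2; ring, ihn] at this
        exact (mul_eq_zero.1 this.symm).resolve_left (mul_ne_zero hc (zpow_ne_zero _ hne))
    have hzeros : ∀ b ∈ ({0}ᶜ : Set ℂ), thetaJ (b / a) q = 0 → ∃ n : ℤ, b = a * q ^ n := by
      intro b hb h0
      by_contra hcon
      exact thetaJ_div_ne_zero hq hq0 ha0 hb hcon h0
    obtain ⟨g, hg, hfg⟩ := exists_quotient isOpen_compl_singleton hf hθ (fun b hb h0 => by
        obtain ⟨n, rfl⟩ := hzeros b hb h0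
        have h1 : deriv (fun x => thetaJ (x / a) q) (a * q ^ n) =
            a⁻¹ • deriv (fun x => thetaJ x q) (a⁻¹ * (a * q ^ n)) := by
          rw [← deriv_comp_mul_left]
          simp [div_eq_inv_mul]
        rw [h1, inv_mul_cancel_left₀ ha0, smul_eq_mul]
        exact mul_ne_zero (inv_ne_zero ha0) (deriv_thetaJ_ne_zero hq hq0 n))
      (fun b hb h0 => by
        obtain ⟨n, rfl⟩ := hzeros b hb h0
        exact hfz n)
    have hgper : ∀ x, x ≠ 0 → g (q * x) = (-(c / a)) * x ^ (-(k - 1)) * g x := by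
      intro x hx
      refine eq_of_eq_off_countable (f := fun x => g (q * x))
        (g := fun x => (-(c / a)) * x ^ (-(k - 1)) * g x) ?_ ?_
        (countable_zeros a q) (fun x hx hxC => ?_) hx
      · refine hg.continuousOn.comp (by fun_prop) fun y hy => mul_ne_zero hq0 hy
      · refine ContinuousOn.mul (ContinuousOn.mul continuousOn_const ?_) hg.continuousOn
        exact fun y hy => (continuousAt_zpow₀ y _ (Or.inl hy)).continuousWithinAt
      · have hj := thetaJ_div_ne_zero hq hq0 ha0 hx hxC
        have h1 := hper x hx
        rw [hfg _ hx, hfg _ (mul_ne_zero hq0 hx), mul_div_assoc,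
          thetaJ_mul hq hq0 (div_ne_zero hx ha0)] at h1
        rw [show -(k - 1) = -k + 1 by ring, zpow_add_one₀ hx]
        refine mul_left_cancel₀ hj ?_
        field_simp at h1 ⊢
        linear_combination -h1
    have hg0 := ih (fun b hb => hS0 b (Finset.mem_insert_of_mem hb))
      (fun b hb b' hb' => hS b (Finset.mem_insert_of_mem hb) b' (Finset.mem_insert_of_mem hb'))
      hg (k := k - 1) (by rw [Finset.card_insert_of_notMem haS] at hk; push_cast at hk; omega)
      (c := -(c / a)) (neg_ne_zero.2 (div_ne_zero hc ha0)) hgper (fun b hb => by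
        have hb0 := hS0 b (Finset.mem_insert_of_mem hb)
        have h1 := hzero b (Finset.mem_insert_of_mem hb)
        rw [hfg b hb0] at h1
        refine (mul_eq_zero.1 h1).resolve_left (thetaJ_div_ne_zero hq hq0 ha0 hb0 ?_)
        rintro ⟨n, hn⟩
        have := hS b (Finset.mem_insert_of_mem hb) a (Finset.mem_insert_self _ _) n hn
        exact haS (this ▸ hb)) hx
    rw [hfg x hx, hg0, mul_zero]

end Multiplier

/-! ### The Appell-type series and the Rogers–Fine identity -/

/-- The entire-on-`ℂ*` numerator `∑ q^(n²) (z q^(n+1), q^(n+1)/z; q)_∞` of the universal mock theta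
function `∑ q^(n²) / ((z;q)_{n+1} (q/z;q)_n)`, whose denominator is `j(z;q)`. -/
noncomputable def Ehat (z q : ℂ) : ℂ :=
  ∑' n : ℕ, q ^ (n ^ 2) * (qPochInf (z * q ^ (n + 1)) q * qPochInf (q ^ (n + 1) / z) q)

section Appell
variable {q : ℂ}

lemma norm_pow_sq_le (hq : ‖q‖ < 1) (n : ℕ) : ‖q‖ ^ (n ^ 2) ≤ ‖q‖ ^ n :=
  pow_le_pow_of_le_one (norm_nonneg _) hq.le (by nlinarith [Nat.zero_le n, sq_nonneg (n : ℤ)])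

lemma Ehat_term_le (hq : ‖q‖ < 1) (z : ℂ) (n m l : ℕ) :
    ‖q ^ (n ^ 2) * (qPochInf (z * q ^ m) q * qPochInf (q ^ l / z) q)‖ ≤
      ‖q‖ ^ n * (Real.exp (‖z‖ / (1 - ‖q‖)) * Real.exp (‖z‖⁻¹ / (1 - ‖q‖))) := by
  have h1 : 0 < 1 - ‖q‖ := sub_pos.2 hq
  have h2 : ∀ m, ‖q‖ ^ m ≤ 1 := fun m => pow_le_one₀ (norm_nonneg _) hq.le
  rw [norm_mul, norm_mul, norm_pow]
  refine mul_le_mul (norm_pow_sq_le hq n) (mul_le_mul ?_ ?_ (norm_nonneg _) (Real.exp_pos _).le)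
    (by positivity) (by positivity)
  · refine (norm_qPochInf_le hq _).trans ?_
    gcongr
    rw [norm_mul, norm_pow]
    exact mul_le_of_le_one_right (norm_nonneg _) (h2 m)
  · refine (norm_qPochInf_le hq _).trans ?_
    gcongr
    rw [norm_div, norm_pow, div_eq_mul_inv]
    exact mul_le_of_le_one_left (by positivity) (h2 l)

lemma Ehat_term_summable (hq : ‖q‖ < 1) (z : ℂ) (k l : ℕ) :
    Summable fun n : ℕ =>
      q ^ (n ^ 2) * (qPochInf (z * q ^ (n + k)) q * qPochInf (q ^ (n + l) / z) q) :=
  Summable.of_norm_bounded ((summable_geometric_of_lt_one (norm_nonneg _) hq).mul_right _)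
    fun n => Ehat_term_le hq z n (n + k) (n + l)

lemma Ehat_inv (z : ℂ) : Ehat z⁻¹ q = Ehat z q := by
  unfold Ehat
  refine tsum_congr fun n => ?_
  rw [div_inv_eq_mul, mul_comm z⁻¹, ← div_eq_mul_inv, mul_comm (qPochInf _ _), mul_comm z]

lemma differentiableOn_Ehat (hq : ‖q‖ < 1) : DifferentiableOn ℂ (fun z => Ehat z q) {0}ᶜ := by
  intro z hz
  have hz0 : z ≠ 0 := hz
  have h1 : 0 < 1 - ‖q‖ := sub_pos.2 hq
  have hzn : 0 < ‖z‖ := norm_pos_iff.2 hz0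
  set U : Set ℂ := {w | ‖w‖ < 2 * ‖z‖} ∩ {w | ‖z‖ / 2 < ‖w‖}
  have hUo : IsOpen U :=
    (isOpen_lt continuous_norm continuous_const).inter (isOpen_lt continuous_const continuous_norm)
  have hzU : z ∈ U := ⟨by show ‖z‖ < 2 * ‖z‖; linarith, by show ‖z‖ / 2 < ‖z‖; linarith⟩
  have h := differentiable_qPochInf hq
  have hd : DifferentiableOn ℂ (fun z => Ehat z q) U := by
    refine Complex.differentiableOn_tsum_of_summable_norm (u := fun n => ‖q‖ ^ n *
      (Real.exp (2 * ‖z‖ / (1 - ‖q‖)) * Real.exp ((‖z‖ / 2)⁻¹ / (1 - ‖q‖))))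
      ((summable_geometric_of_lt_one (norm_nonneg _) hq).mul_right _) (fun n w hw => ?_) hUo
      (fun n w hw => ?_)
    · have hw0 : w ≠ 0 := by
        rintro rfl
        have : ‖z‖ / 2 < ‖(0 : ℂ)‖ := hw.2
        rw [norm_zero] at this; linarith
      have e1 : DifferentiableAt ℂ (fun w => qPochInf (w * q ^ (n + 1)) q) w :=
        (h _).comp w (f := fun w => w * q ^ (n + 1)) (by fun_prop)
      have e2 : DifferentiableAt ℂ (fun w => qPochInf (q ^ (n + 1) / w) q) w :=
        (h _).comp w (f := fun w => q ^ (n + 1) / w) (by fun_prop (disch := exact hw0))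
      exact ((e1.mul e2).const_mul _).differentiableWithinAt
    · have a1 : ‖w‖ < 2 * ‖z‖ := hw.1
      have a2 : ‖z‖ / 2 < ‖w‖ := hw.2
      refine (Ehat_term_le hq w n (n + 1) (n + 1)).trans ?_
      gcongr
  exact (hd.differentiableAt (hUo.mem_nhds hzU)).differentiableWithinAt

/-- The functional equation of the numerator under `z ↦ q z`; the series telescopes. -/
lemma Ehat_mul (hq : ‖q‖ < 1) (hq0 : q ≠ 0) {z : ℂ} (hz : z ≠ 0) :
    Ehat (q * z) q = q * z ^ 2 * Ehat z q - (1 - q * z ^ 2) * z⁻¹ * thetaJ z q := by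
  set τ : ℕ → ℂ := fun n =>
    q ^ (n ^ 2) * (qPochInf (z * q ^ (n + 1)) q * qPochInf (q ^ (n + 0) / z) q) with hτ
  have sτ : Summable τ := Ehat_term_summable hq z 1 0
  have sE := Ehat_term_summable hq z 1 1
  have sA : Summable fun n : ℕ => τ n - τ (n + 1) := sτ.sub ((summable_nat_add_iff 1).2 sτ)
  have tele : ∑' n, (τ n - τ (n + 1)) = τ 0 := by
    rw [sτ.tsum_sub ((summable_nat_add_iff 1).2 sτ), sτ.tsum_eq_zero_add]; ring
  have hτ0 : τ 0 = -z⁻¹ * thetaJ z q := by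
    rw [← thetaJ_inv hq hz, thetaJ]
    simp only [hτ]
    rw [div_inv_eq_mul]
    simp [mul_comm]
  have key : Ehat (q * z) q =
      ∑' n : ℕ, (q * z ^ 2 * (q ^ (n ^ 2) *
        (qPochInf (z * q ^ (n + 1)) q * qPochInf (q ^ (n + 1) / z) q)) +
        (1 - q * z ^ 2) * (τ n - τ (n + 1))) := by
    unfold Ehat
    refine tsum_congr fun n => ?_
    simp only [hτ]
    have e1 : qPochInf (z * q ^ (n + 1)) q =
        (1 - z * q ^ (n + 1)) * qPochInf (z * q ^ (n + 1 + 1)) q := by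
      rw [qPochInf_step hq]; ring_nf
    have e2 : qPochInf (q ^ (n + 0) / z) q =
        (1 - q ^ n / z) * qPochInf (q ^ (n + 1) / z) q := by
      rw [qPochInf_step hq, add_zero]; ring_nf
    rw [e2, e1, show q * z * q ^ (n + 1) = z * q ^ (n + 1 + 1) by ring,
      show q ^ (n + 1) / (q * z) = q ^ (n + 0) / z by rw [pow_succ']; field_simp; ring, e2,
      add_zero]
    have : q ^ (n + 1) ^ 2 = q ^ (n ^ 2) * (q ^ n) ^ 2 * q := by
      rw [← pow_mul, ← pow_add, ← pow_succ]; congr 1; ring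
    rw [this, pow_succ q n]
    field_simp
    ring
  rw [key, Summable.tsum_add (sE.mul_left _) (sA.mul_left _), tsum_mul_left, tsum_mul_left, tele,
    hτ0]
  unfold Ehat
  ring

/-- `∑ q^(n²) / ((zq;q)_n (q/z;q)_n)` as a quotient. -/
lemma Ehat_div_thetaJ0 (hq : ‖q‖ < 1) {z : ℂ} (h1 : ∀ k : ℕ, z * q * q ^ k ≠ 1)
    (h2 : ∀ k : ℕ, q / z * q ^ k ≠ 1) :
    ∑' n : ℕ, q ^ (n ^ 2) / (qPochN (z * q) q n * qPochN (q / z) q n) =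
      Ehat z q / thetaJ0 z q := by
  unfold Ehat thetaJ0
  rw [← tsum_div_const]
  refine tsum_congr fun n => ?_
  have a1 := qPochInf_ne_zero hq h1
  have a2 := qPochInf_ne_zero hq h2
  rw [qPochInf_eq_mul hq (z * q) n] at a1 ⊢
  rw [qPochInf_eq_mul hq (q / z) n] at a2 ⊢
  rw [mul_ne_zero_iff] at a1 a2
  obtain ⟨b1, b2⟩ := a1
  obtain ⟨b3, b4⟩ := a2
  rw [show z * q * q ^ n = z * q ^ (n + 1) by ring] at b2 ⊢
  rw [show q / z * q ^ n = q ^ (n + 1) / z by ring] at b4 ⊢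
  field_simp

/-- `∑ q^(n²) / ((z;q)_{n+1} (q/z;q)_n)` as a quotient. -/
lemma Ehat_div_thetaJ (hq : ‖q‖ < 1) {z : ℂ} (h1 : ∀ k : ℕ, z * q ^ k ≠ 1)
    (h2 : ∀ k : ℕ, q / z * q ^ k ≠ 1) :
    ∑' n : ℕ, q ^ (n ^ 2) / (qPochN z q (n + 1) * qPochN (q / z) q n) =
      Ehat z q / thetaJ z q := by
  unfold Ehat thetaJ
  rw [← tsum_div_const]
  refine tsum_congr fun n => ?_
  have a1 := qPochInf_ne_zero hq h1
  have a2 := qPochInf_ne_zero hq h2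
  rw [qPochInf_eq_mul hq z (n + 1)] at a1 ⊢
  rw [qPochInf_eq_mul hq (q / z) n] at a2 ⊢
  rw [mul_ne_zero_iff] at a1 a2
  obtain ⟨b1, b2⟩ := a1
  obtain ⟨b3, b4⟩ := a2
  rw [show q / z * q ^ n = q ^ (n + 1) / z by ring] at b4 ⊢
  field_simp

lemma norm_mul_pow_ne_one (hq : ‖q‖ < 1) {a : ℂ} (ha : ‖a‖ < 1) (k : ℕ) : a * q ^ k ≠ 1 := by
  intro h
  have : ‖a * q ^ k‖ < 1 := by
    rw [norm_mul, norm_pow]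
    exact mul_lt_one_of_nonneg_of_lt_one_left (norm_nonneg _) ha (pow_le_one₀ (norm_nonneg _) hq.le)
  rw [h, norm_one] at this
  exact lt_irrefl _ this

lemma exists_inv_qPochN_le (hq : ‖q‖ < 1) {a : ℂ} (ha : ‖a‖ < 1) :
    ∃ K : ℝ, 0 < K ∧ ∀ n, ‖(qPochN a q n)⁻¹‖ ≤ K := by
  have h := (qPochN_tendsto hq a).inv₀ (qPochInf_ne_zero_of_norm hq ha)
  obtain ⟨K, hK⟩ := (Metric.isBounded_range_of_tendsto _ h).exists_norm_le
  refine ⟨max K 1, by positivity, fun n => (hK _ ⟨n, rfl⟩).trans (le_max_left _ _)⟩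

/-- The case of the Rogers–Fine identity that turns the sum over the largest part of a partition
into the sum over its Durfee square. -/
lemma rogersFine (hq : ‖q‖ < 1) {z : ℂ} (hz : ‖z‖ = 1) :
    1 + ∑' n : ℕ, z ^ n * q ^ (n + 1) / qPochN (q / z) q (n + 1) =
      ∑' n : ℕ, q ^ (n ^ 2) / (qPochN (z * q) q n * qPochN (q / z) q n) := by
  have hz0 : z ≠ 0 := by rintro rfl; simp at hz
  have ha : ‖q / z‖ < 1 := by rw [norm_div, hz, div_one]; exact hq
  have hb : ‖z * q‖ < 1 := by rw [norm_mul, hz, one_mul]; exact hq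
  obtain ⟨K, hK0, hK⟩ := exists_inv_qPochN_le hq ha
  obtain ⟨K', hK0', hK'⟩ := exists_inv_qPochN_le hq hb
  set D : ℕ → ℂ := qPochN (q / z) q with hD
  set B : ℕ → ℂ := qPochN (z * q) q with hB
  have hD0 : ∀ n, D n ≠ 0 := fun n => qPochN_ne_zero (norm_mul_pow_ne_one hq ha)
  have hB0 : ∀ n, B n ≠ 0 := fun n => qPochN_ne_zero (norm_mul_pow_ne_one hq hb)
  -- `S N` is the series left over after `N + 1` steps of the iteration.
  set S : ℕ → ℂ := fun N => ∑' n : ℕ, (z * q ^ (N + 1)) ^ n * (D (N + 1 + n))⁻¹ with hS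
  have tb : ∀ N n : ℕ, ‖(z * q ^ (N + 1)) ^ n‖ ≤ ‖q‖ ^ n := fun N n => by
    rw [norm_pow, norm_mul, hz, one_mul, norm_pow]
    gcongr
    exact pow_le_of_le_one (norm_nonneg _) hq.le (by omega)
  have hle : ∀ N M n : ℕ, ‖(z * q ^ (N + 1)) ^ n * (D M)⁻¹‖ ≤ ‖q‖ ^ n * K :=
    fun N M n => by
      rw [norm_mul]
      exact mul_le_mul (tb N n) (hK _) (norm_nonneg _) (by positivity)
  have hgeo := (summable_geometric_of_lt_one (norm_nonneg _) hq).mul_right K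
  have hsum : ∀ N k : ℕ, Summable fun n : ℕ => (z * q ^ (N + 1)) ^ n * (D (k + n))⁻¹ := fun N k =>
    Summable.of_norm_bounded hgeo fun n => hle N _ n
  have hSle : ∀ N, ‖S N‖ ≤ (1 - ‖q‖)⁻¹ * K := fun N => by
    rw [← tsum_geometric_of_lt_one (norm_nonneg _) hq, ← tsum_mul_right]
    exact tsum_of_norm_bounded hgeo.hasSum fun n => hle N _ n
  have hrec : ∀ N, (1 - z * q ^ (N + 1)) * S N = (D (N + 1))⁻¹ + q ^ (2 * N + 3) * S (N + 1) := by
    intro N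
    have e1 : S N = (D (N + 1))⁻¹ +
        ∑' n : ℕ, (z * q ^ (N + 1)) ^ (n + 1) * (D (N + 1 + (n + 1)))⁻¹ := by
      simp only [hS]
      rw [(hsum N (N + 1)).tsum_eq_zero_add]; simp
    have e2 : z * q ^ (N + 1) * S N =
        ∑' n : ℕ, (z * q ^ (N + 1)) ^ (n + 1) * (D (N + 1 + n))⁻¹ := by
      simp only [hS]
      rw [← tsum_mul_left]
      exact tsum_congr fun n => by ring
    have s1 : Summable fun n : ℕ => (z * q ^ (N + 1)) ^ (n + 1) * (D (N + 1 + (n + 1)))⁻¹ :=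
      (summable_nat_add_iff 1).2 (hsum N (N + 1))
    have s2 : Summable fun n : ℕ => (z * q ^ (N + 1)) ^ (n + 1) * (D (N + 1 + n))⁻¹ :=
      ((hsum N (N + 1)).mul_left (z * q ^ (N + 1))).congr fun n => by ring
    rw [sub_mul, one_mul, e2, e1, add_sub_assoc, ← s1.tsum_sub s2]
    congr 1
    simp only [hS]
    rw [← tsum_mul_left]
    refine tsum_congr fun n => ?_
    have h1 : D (N + 1 + (n + 1)) = D (N + 1 + n) * (1 - q / z * q ^ (N + 1 + n)) := by
      rw [← add_assoc, hD, qPochN_succ]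
    have h2 := hD0 (N + 1 + (n + 1))
    have h3 := hD0 (N + 1 + n)
    rw [show N + 1 + 1 + n = N + 1 + (n + 1) by ring]
    rw [h1] at h2 ⊢
    have h4 := (mul_ne_zero_iff.1 h2).2
    rw [mul_inv, show (D (N + 1 + n))⁻¹ = (D (N + 1 + n))⁻¹ *
      ((1 - q / z * q ^ (N + 1 + n)) * (1 - q / z * q ^ (N + 1 + n))⁻¹) by
        rw [mul_inv_cancel₀ h4, mul_one]]
    simp only [mul_pow, ← pow_mul]
    field_simp
    ring
  have hpart : ∀ N, 1 + q * S 0 = ∑ n ∈ Finset.range (N + 1), q ^ (n ^ 2) / (B n * D n) +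
      q ^ ((N + 1) ^ 2) * (B N)⁻¹ * S N := by
    intro N
    induction N with
    | zero => simp [hB, hD, qPochN]
    | succ N ih =>
      rw [ih, Finset.sum_range_succ _ (N + 1)]
      have h1 : B (N + 1) = B N * (1 - z * q ^ (N + 1)) := by
        rw [hB, qPochN_succ]; ring
      have h2 := hB0 (N + 1)
      have h5 := hD0 (N + 1)
      rw [h1] at h2 ⊢
      obtain ⟨h3, h4⟩ := mul_ne_zero_iff.1 h2
      have h6 : S N = (1 - z * q ^ (N + 1))⁻¹ *
          ((D (N + 1))⁻¹ + q ^ (2 * N + 3) * S (N + 1)) := by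
        rw [← hrec, inv_mul_cancel_left₀ h4]
      rw [h6]
      have h7 : q ^ (N + 1 + 1) ^ 2 = q ^ ((N + 1) ^ 2) * q ^ (2 * N + 3) := by
        rw [← pow_add]; congr 1; ring
      rw [h7]
      field_simp
      ring
  have hlim : Tendsto (fun N => q ^ ((N + 1) ^ 2) * (B N)⁻¹ * S N) atTop (𝓝 0) := by
    refine squeeze_zero_norm (a := fun N => ‖q‖ ^ (N + 1) * (K' * ((1 - ‖q‖)⁻¹ * K)))
      (fun N => ?_) ?_
    · rw [mul_assoc, norm_mul, norm_mul, norm_pow]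
      have := norm_pow_sq_le hq (N + 1)
      have := hSle N
      have := hK' N
      gcongr
    · have := ((tendsto_add_atTop_iff_nat 1).2
        (tendsto_pow_atTop_nhds_zero_of_lt_one (norm_nonneg q) hq)).mul_const
        (K' * ((1 - ‖q‖)⁻¹ * K))
      simpa using this
  have hsummable : Summable fun n : ℕ => q ^ (n ^ 2) / (B n * D n) := by
    refine Summable.of_norm_bounded
      ((summable_geometric_of_lt_one (norm_nonneg _) hq).mul_right (K' * K)) fun n => ?_
    rw [div_eq_mul_inv, mul_inv, norm_mul, norm_mul, norm_pow]
    have := norm_pow_sq_le hq n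
    have := hK n
    have := hK' n
    gcongr
  have h1 := (tendsto_add_atTop_iff_nat 1).2 hsummable.hasSum.tendsto_sum_nat
  have h2 := h1.add hlim
  rw [add_zero] at h2
  have h3 := tendsto_nhds_unique h2 (tendsto_const_nhds.congr hpart)
  rw [h3]
  congr 1
  simp only [hS]
  rw [← tsum_mul_left]
  refine tsum_congr fun n => ?_
  rw [show 0 + 1 + n = n + 1 by ring, div_eq_mul_inv]
  ring

/-- Equivalent to `∑ q^(n²) / (q;q)_n² = 1 / (q;q)_∞`: at `z = 1` the other side of the Rogers–Fine
identity is a telescoping series. -/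
lemma Ehat_one (hq : ‖q‖ < 1) : Ehat 1 q = qPochInf q q := by
  have h := rogersFine hq (z := 1) (by simp)
  rw [Ehat_div_thetaJ0 hq (by simpa using norm_mul_pow_ne_one hq hq)
    (by simpa using norm_mul_pow_ne_one hq hq), thetaJ0_one] at h
  simp only [one_pow, one_mul, div_one] at h
  have hne := qPochInf_self_ne_zero hq
  have hD0 : ∀ n, qPochN q q n ≠ 0 := fun n => qPochN_ne_zero (norm_mul_pow_ne_one hq hq)
  have hpart : ∀ N, 1 + ∑ n ∈ Finset.range N, q ^ (n + 1) / qPochN q q (n + 1) =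
      (qPochN q q N)⁻¹ := by
    intro N
    induction N with
    | zero => simp [qPochN]
    | succ N ih =>
      rw [Finset.sum_range_succ, ← add_assoc, ih]
      have h1 := hD0 (N + 1)
      rw [qPochN_succ] at h1 ⊢
      obtain ⟨h2, h3⟩ := mul_ne_zero_iff.1 h1
      field_simp
      ring
  obtain ⟨K, hK0, hK⟩ := exists_inv_qPochN_le hq hq
  have hs : Summable fun n : ℕ => q ^ (n + 1) / qPochN q q (n + 1) := by
    refine Summable.of_norm_bounded
      (((summable_nat_add_iff 1).2 (summable_geometric_of_lt_one (norm_nonneg _) hq)).mul_right K)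
      fun n => ?_
    rw [div_eq_mul_inv, norm_mul, norm_pow]
    exact mul_le_mul_of_nonneg_left (hK _) (by positivity)
  have h1 := hs.hasSum.tendsto_sum_nat.const_add 1
  have h2 := (qPochN_tendsto hq q).inv₀ hne
  rw [tendsto_nhds_unique h1 (h2.congr fun N => (hpart N).symm)] at h
  field_simp at h
  exact h.symm

lemma Ehat_zpow (hq : ‖q‖ < 1) (hq0 : q ≠ 0) (m : ℤ) :
    Ehat (q ^ m) q = q ^ (m ^ 2) * qPochInf q q := by
  have hstep : ∀ m : ℤ, Ehat (q ^ (m + 1)) q = q ^ (2 * m + 1) * Ehat (q ^ m) q := by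
    intro m
    rw [zpow_add_one₀ hq0, mul_comm, Ehat_mul hq hq0 (zpow_ne_zero _ hq0),
      (thetaJ_eq_zero_iff hq hq0 (zpow_ne_zero _ hq0)).2 ⟨m, rfl⟩, zpow_add_one₀ hq0, mul_comm 2 m,
      zpow_mul]
    norm_cast
    ring
  induction m using Int.induction_on with
  | zero => simp [Ehat_one hq]
  | succ n ih =>
    rw [hstep, ih, ← mul_assoc, ← zpow_add₀ hq0]; congr 2; ring
  | pred n ih =>
    have h := hstep (-(n : ℤ) - 1)
    rw [sub_add_cancel, ih] at h
    have h2 : Ehat (q ^ (-(n : ℤ) - 1)) q = q ^ (-(2 * (-(n : ℤ) - 1) + 1)) *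
        (q ^ ((-(n : ℤ)) ^ 2) * qPochInf q q) := by
      rw [h, ← mul_assoc, ← zpow_add₀ hq0]; simp
    rw [h2, ← mul_assoc, ← zpow_add₀ hq0]; congr 2; ring

end Appell

/-! ### The rank generating function -/

/-- Partitions, as multisets, all of whose parts lie in `[1, m]`. -/
def BddParts (m : ℕ) : Type := {s : Multiset ℕ // ∀ x ∈ s, 1 ≤ x ∧ x ≤ m}

/-- The weight `b^(number of parts) q^(sum of parts)`. -/
noncomputable def partsWeight (b q : ℂ) (s : Multiset ℕ) : ℂ := b ^ s.card * q ^ s.sum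

/-- Splitting off the parts equal to `m + 1`. -/
lemma exists_equiv_bddParts (m : ℕ) : ∃ e : ℕ × BddParts m ≃ BddParts (m + 1),
    ∀ k t, (e (k, t)).1 = Multiset.replicate k (m + 1) + t.1 := by
  have hmem : ∀ (k : ℕ) (t : BddParts m), ∀ x ∈ Multiset.replicate k (m + 1) + t.1,
      1 ≤ x ∧ x ≤ m + 1 := by
    intro k t x hx
    rcases Multiset.mem_add.1 hx with h | h
    · rw [Multiset.eq_of_mem_replicate h]; omega
    · have := t.2 x h; omega
  have hcount : ∀ t : BddParts m, Multiset.count (m + 1) t.1 = 0 := fun t =>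
    Multiset.count_eq_zero.2 fun h => by have := t.2 _ h; omega
  refine ⟨Equiv.ofBijective (fun x => ⟨Multiset.replicate x.1 (m + 1) + x.2.1, hmem x.1 x.2⟩)
    ⟨?_, ?_⟩, fun k t => rfl⟩
  · rintro ⟨k, t⟩ ⟨l, u⟩ h
    have h1 : Multiset.replicate k (m + 1) + t.1 = Multiset.replicate l (m + 1) + u.1 :=
      congrArg Subtype.val h
    have h2 := congrArg (Multiset.count (m + 1)) h1
    rw [Multiset.count_add, Multiset.count_add, hcount, hcount, Multiset.count_replicate_self,
      Multiset.count_replicate_self] at h2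
    simp only [add_zero] at h2
    subst h2
    exact Prod.ext rfl (Subtype.ext (add_left_cancel h1))
  · rintro ⟨s, hs⟩
    refine ⟨(Multiset.count (m + 1) s, ⟨s.filter fun a => ¬ a = m + 1, fun x hx => ?_⟩), ?_⟩
    · obtain ⟨h1, h2⟩ := Multiset.mem_filter.1 hx
      have := hs x h1
      omega
    · refine Subtype.ext ?_
      show Multiset.replicate (Multiset.count (m + 1) s) (m + 1) + s.filter (fun a => ¬ a = m + 1) = s
      rw [← Multiset.filter_eq', Multiset.filter_add_not]

lemma bddParts_zero (s : BddParts 0) : s.1 = 0 :=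
  Multiset.eq_zero_of_forall_notMem fun x hx => by have := s.2 x hx; omega

lemma bddParts_gf {b q : ℂ} (hb : ‖b‖ = 1) (hq : ‖q‖ < 1) (m : ℕ) :
    (Summable fun s : BddParts m => ‖partsWeight b q s.1‖) ∧
      ∑' s : BddParts m, partsWeight b q s.1 = (qPochN (b * q) q m)⁻¹ := by
  induction m with
  | zero =>
    have : Unique (BddParts 0) := ⟨⟨⟨0, by simp⟩⟩, fun s => Subtype.ext (bddParts_zero s)⟩
    refine ⟨(hasSum_fintype _).summable, ?_⟩
    rw [tsum_fintype, Fintype.sum_unique, bddParts_zero]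
    simp [partsWeight, qPochN]
  | succ m ih =>
    obtain ⟨ih1, ih2⟩ := ih
    obtain ⟨e, he⟩ := exists_equiv_bddParts m
    have hlt : ‖b * q ^ (m + 1)‖ < 1 := by
      rw [norm_mul, hb, one_mul, norm_pow]
      exact pow_lt_one₀ (norm_nonneg _) hq (by omega)
    have hw : ∀ x : ℕ × BddParts m, partsWeight b q (e x).1 =
        (b * q ^ (m + 1)) ^ x.1 * partsWeight b q x.2.1 := by
      rintro ⟨k, t⟩
      rw [he]
      simp only [partsWeight, Multiset.card_add, Multiset.card_replicate, Multiset.sum_add,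
        Multiset.sum_replicate, smul_eq_mul, pow_add, mul_pow, ← pow_mul]
      ring
    have hg : Summable fun k : ℕ => ‖(b * q ^ (m + 1)) ^ k‖ := by
      simp only [norm_pow]; exact summable_geometric_of_lt_one (norm_nonneg _) hlt
    constructor
    · rw [← e.summable_iff]
      refine (hg.mul_of_nonneg ih1 (fun _ => norm_nonneg _) (fun _ => norm_nonneg _)).congr
        fun x => ?_
      rw [Function.comp_apply, hw, norm_mul]
    · rw [← e.tsum_eq]
      simp only [hw]
      rw [← tsum_mul_tsum_of_summable_norm hg ih1, tsum_geometric_of_norm_lt_one hlt, ih2,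
        qPochN_succ, mul_inv, mul_comm]
      congr 2
      ring

/-- Nonempty partitions are classified by their largest part. -/
lemma exists_equiv_partition :
    ∃ e : Unit ⊕ (Σ m : ℕ, BddParts (m + 1)) ≃ Σ n : ℕ, n.Partition,
      (e (Sum.inl ())).2.parts = 0 ∧
      ∀ m t, (e (Sum.inr ⟨m, t⟩)).2.parts = (m + 1) ::ₘ t.1 := by
  have hpos : ∀ m (t : BddParts (m + 1)), ∀ {i}, i ∈ (m + 1) ::ₘ t.1 → 0 < i := by
    intro m t i hi
    rcases Multiset.mem_cons.1 hi with h | h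
    · omega
    · exact (t.2 i h).1
  have hsup : ∀ m (t : BddParts (m + 1)), ((m + 1) ::ₘ t.1).sup = m + 1 := by
    intro m t
    rw [Multiset.sup_cons]
    exact max_eq_left (Multiset.sup_le.2 fun b hb => (t.2 b hb).2)
  let f : Unit ⊕ (Σ m : ℕ, BddParts (m + 1)) → Σ n : ℕ, n.Partition := Sum.elim
    (fun _ => ⟨_, ⟨0, by simp, rfl⟩⟩) (fun x => ⟨_, ⟨(x.1 + 1) ::ₘ x.2.1, hpos x.1 x.2, rfl⟩⟩)
  have hext : ∀ x y : Σ n : ℕ, n.Partition, x.2.parts = y.2.parts → x = y := by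
    rintro ⟨n, p, hp, rfl⟩ ⟨m, r, hr, rfl⟩ h
    simp only at h
    subst h
    rfl
  refine ⟨Equiv.ofBijective f ⟨?_, ?_⟩, rfl, fun m t => rfl⟩
  · rintro (⟨⟩ | ⟨m, t⟩) (⟨⟩ | ⟨l, u⟩) h
    · rfl
    · have : (0 : Multiset ℕ) = (l + 1) ::ₘ u.1 := congrArg (fun x => x.2.parts) h
      exact absurd this.symm (Multiset.cons_ne_zero)
    · have : (m + 1) ::ₘ t.1 = (0 : Multiset ℕ) := congrArg (fun x => x.2.parts) h
      exact absurd this (Multiset.cons_ne_zero)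
    · have h1 : (m + 1) ::ₘ t.1 = (l + 1) ::ₘ u.1 := congrArg (fun x => x.2.parts) h
      have h2 := congrArg Multiset.sup h1
      rw [hsup, hsup] at h2
      obtain rfl : m = l := by omega
      have h3 : t = u := Subtype.ext ((Multiset.cons_inj_right _).1 h1)
      rw [h3]
  · rintro ⟨n, p⟩
    rcases Nat.eq_zero_or_pos p.parts.sup with h0 | h0
    · refine ⟨Sum.inl (), hext _ _ ?_⟩
      refine (Multiset.eq_zero_of_forall_notMem fun x hx => ?_).symm
      have h1 : x ≤ p.parts.sup := Multiset.le_sup hx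
      have h2 : 0 < x := p.parts_pos hx
      omega
    · have hne : p.parts ≠ 0 := by intro h; rw [h] at h0; simp at h0
      have hmem : p.parts.sup ∈ p.parts := by
        have key : ∀ s : Multiset ℕ, s ≠ 0 → s.sup ∈ s := by
          intro s
          induction s using Multiset.induction_on with
          | empty => simp
          | cons a s ih =>
            intro _
            rw [Multiset.sup_cons]
            rcases max_choice a s.sup with h | h
            · simp only [h]; exact Multiset.mem_cons_self _ _
            · by_cases hs : s = 0
              · subst hs; simp
              · simp only [h]; exact Multiset.mem_cons_of_mem (ih hs)
        exact key _ hne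
      have hs : p.parts.sup - 1 + 1 = p.parts.sup := by omega
      refine ⟨Sum.inr ⟨p.parts.sup - 1, ⟨p.parts.erase p.parts.sup, fun x hx => ?_⟩⟩, hext _ _ ?_⟩
      · have hx' := Multiset.mem_of_mem_erase hx
        exact ⟨p.parts_pos hx', by rw [hs]; exact Multiset.le_sup hx'⟩
      · show (p.parts.sup - 1 + 1) ::ₘ p.parts.erase p.parts.sup = p.parts
        rw [hs, Multiset.cons_erase hmem]

/-- The rank generating function on the unit circle, summed over the largest part. -/
lemma rankGF_eq {z q : ℂ} (hz : ‖z‖ = 1) (hq : ‖q‖ < 1) :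
    rankGF z q = 1 + ∑' n : ℕ, z ^ n * q ^ (n + 1) / qPochN (q / z) q (n + 1) := by
  have hz0 : z ≠ 0 := by rintro rfl; simp at hz
  have hb : ‖z⁻¹‖ = 1 := by rw [norm_inv, hz, inv_one]
  obtain ⟨e, he0, he⟩ := exists_equiv_partition
  set W : (Σ n : ℕ, n.Partition) → ℂ := fun x => z ^ partitionRank x.2 * q ^ x.1 with hW
  have hW0 : W (e (Sum.inl ())) = 1 := by
    have h := (e (Sum.inl ())).2.parts_sum
    rw [he0] at h
    simp only [hW, partitionRank, he0, ← h]
    simp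
  have hW1 : ∀ m t, W (e (Sum.inr ⟨m, t⟩)) = z ^ m * q ^ (m + 1) * partsWeight z⁻¹ q t.1 := by
    intro m t
    have h := (e (Sum.inr ⟨m, t⟩)).2.parts_sum
    rw [he] at h
    simp only [hW, partitionRank, he, ← h]
    have hsup : ((m + 1) ::ₘ t.1).sup = m + 1 := by
      rw [Multiset.sup_cons]
      exact max_eq_left (Multiset.sup_le.2 fun b hb => (t.2 b hb).2)
    rw [hsup, Multiset.card_cons, Multiset.sum_cons, partsWeight, inv_pow, pow_add q (m + 1)]
    rw [show ((m + 1 : ℕ) : ℤ) - ((t.1.card + 1 : ℕ) : ℤ) = (m : ℤ) - (t.1.card : ℤ) by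
      push_cast; ring, zpow_sub₀ hz0, zpow_natCast, zpow_natCast]
    field_simp
  obtain ⟨K, hK0, hK⟩ := exists_inv_qPochN_le (q := (‖q‖ : ℂ)) (a := (‖q‖ : ℂ)) (by simpa) (by simpa)
  have hnorm : ∀ m (t : BddParts m), ‖partsWeight z⁻¹ q t.1‖ = ‖q‖ ^ t.1.sum := fun m t => by
    simp [partsWeight, hz]
  have hKm : ∀ m, ∑' t : BddParts m, ‖partsWeight z⁻¹ q t.1‖ ≤ K := by
    intro m
    have h := (bddParts_gf (b := 1) (q := (‖q‖ : ℂ)) (by simp) (by simpa) m).2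
    rw [one_mul] at h
    have h2 : ((∑' t : BddParts m, ‖partsWeight z⁻¹ q t.1‖ : ℝ) : ℂ) =
        (qPochN (‖q‖ : ℂ) (‖q‖ : ℂ) m)⁻¹ := by
      rw [← h, Complex.ofReal_tsum]
      refine tsum_congr fun t => ?_
      rw [hnorm]; simp [partsWeight]
    have h3 := hK m
    rw [← h2, Complex.norm_real] at h3
    exact (le_abs_self _).trans h3
  set V : (Σ m : ℕ, BddParts (m + 1)) → ℂ :=
    fun x => z ^ x.1 * q ^ (x.1 + 1) * partsWeight z⁻¹ q x.2.1 with hV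
  have hVs : Summable V := by
    refine Summable.of_norm ((summable_sigma_of_nonneg fun _ => norm_nonneg _).2 ⟨fun m => ?_, ?_⟩)
    · simp only [hV, norm_mul]
      exact (bddParts_gf hb hq (m + 1)).1.mul_left _
    · refine Summable.of_nonneg_of_le (fun m => tsum_nonneg fun _ => norm_nonneg _) (fun m => ?_)
        (((summable_nat_add_iff 1).2
          (summable_geometric_of_lt_one (norm_nonneg q) hq)).mul_right K)
      simp only [hV, norm_mul, norm_pow, hz, one_pow, one_mul]
      rw [tsum_mul_left]
      exact mul_le_mul_of_nonneg_left (hKm _) (by positivity)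
  have hVt : ∑' x, V x = ∑' n : ℕ, z ^ n * q ^ (n + 1) / qPochN (q / z) q (n + 1) := by
    rw [hVs.tsum_sigma]
    refine tsum_congr fun m => ?_
    simp only [hV]
    rw [tsum_mul_left, (bddParts_gf hb hq (m + 1)).2, div_eq_mul_inv, div_eq_mul_inv, mul_comm q]
  have hsum : HasSum (fun y => W (e y)) (1 + ∑' x, V x) := by
    refine HasSum.sum ?_ ?_
    · have : (fun y => W (e y)) ∘ Sum.inl = fun _ : Unit => (1 : ℂ) := by
        funext u; exact hW0
      rw [this]
      exact hasSum_unique _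
    · have : (fun y => W (e y)) ∘ Sum.inr = V := by
        funext u; exact hW1 u.1 u.2
      rw [this]
      exact hVs.hasSum
  have hsum' : HasSum W (1 + ∑' x, V x) := e.hasSum_iff.1 hsum
  rw [rankGF, ← hVt, ← hsum'.tsum_eq, hsum'.summable.tsum_sigma]
  refine tsum_congr fun n => ?_
  rw [tsum_fintype, Finset.sum_mul]

/-- `R(z;q) = (1 - z) ∑ q^(n²) / ((z;q)_{n+1} (q/z;q)_n)` on the unit circle. -/
lemma rankGF_eq_Ehat {z q : ℂ} (hz : ‖z‖ = 1) (hq : ‖q‖ < 1) :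
    rankGF z q = Ehat z q / thetaJ0 z q := by
  rw [rankGF_eq hz hq, rogersFine hq hz, Ehat_div_thetaJ0 hq]
  · exact norm_mul_pow_ne_one hq (by rw [norm_mul, hz, one_mul]; exact hq)
  · exact norm_mul_pow_ne_one hq (by rw [norm_div, hz, div_one]; exact hq)

/-! ### The quintic dissection of the Appell-type series -/

section Dissection
variable {q ζ : ℂ}

lemma root_pow_five (hζ : 1 + ζ + ζ ^ 2 + ζ ^ 3 + ζ ^ 4 = 0) : ζ ^ 5 = 1 := by
  linear_combination (ζ - 1) * hζ

lemma norm_pow_lt_one (hq : ‖q‖ < 1) {n : ℕ} (hn : n ≠ 0) : ‖q ^ n‖ < 1 := by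
  rw [norm_pow]; exact pow_lt_one₀ (norm_nonneg _) hq hn

/-- `∏ j(ζ^i z; q) = ∏ j(z⁵ q^{5r}; q²⁵)`: both are `j(z⁵; q⁵)`. -/
lemma thetaJ_prod (hq : ‖q‖ < 1) (hq0 : q ≠ 0) (hζ : 1 + ζ + ζ ^ 2 + ζ ^ 3 + ζ ^ 4 = 0) {z : ℂ}
    (hz : z ≠ 0) :
    thetaJ z q * thetaJ (ζ * z) q * thetaJ (ζ ^ 2 * z) q * thetaJ (ζ ^ 3 * z) q *
        thetaJ (ζ ^ 4 * z) q =
      thetaJ (z ^ 5) (q ^ 25) * thetaJ (z ^ 5 * q ^ 5) (q ^ 25) *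
        thetaJ (z ^ 5 * q ^ 10) (q ^ 25) * thetaJ (z ^ 5 * q ^ 15) (q ^ 25) *
        thetaJ (z ^ 5 * q ^ 20) (q ^ 25) := by
  have h5 := root_pow_five hζ
  have hζ0 : ζ ≠ 0 := by rintro rfl; simp at h5
  have r1 := qPochInf_root hq hζ z
  have r2 := qPochInf_root hq hζ (q / z)
  have r3 := qPochInf_five (norm_pow_lt_one hq (n := 5) (by norm_num)) (z ^ 5)
  have r4 := qPochInf_five (norm_pow_lt_one hq (n := 5) (by norm_num)) ((q / z) ^ 5)
  rw [← r1] at r3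
  rw [← r2] at r4
  simp only [thetaJ]
  have e1 : q / (ζ * z) = ζ ^ 4 * (q / z) := by field_simp; rw [h5]
  have e2 : q / (ζ ^ 2 * z) = ζ ^ 3 * (q / z) := by field_simp; rw [h5]
  have e3 : q / (ζ ^ 3 * z) = ζ ^ 2 * (q / z) := by field_simp; rw [h5]
  have e4 : q / (ζ ^ 4 * z) = ζ * (q / z) := by field_simp; rw [h5]
  rw [e1, e2, e3, e4]
  have f0 : q ^ 25 / z ^ 5 = (q / z) ^ 5 * (q ^ 5) ^ 4 := by field_simp
  have f1 : q ^ 25 / (z ^ 5 * q ^ 5) = (q / z) ^ 5 * (q ^ 5) ^ 3 := by field_simp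
  have f2 : q ^ 25 / (z ^ 5 * q ^ 10) = (q / z) ^ 5 * (q ^ 5) ^ 2 := by field_simp
  have f3 : q ^ 25 / (z ^ 5 * q ^ 15) = (q / z) ^ 5 * q ^ 5 := by field_simp
  have f4 : q ^ 25 / (z ^ 5 * q ^ 20) = (q / z) ^ 5 := by field_simp
  rw [f0, f1, f2, f3, f4]
  simp only [← pow_mul] at r3 r4 ⊢
  norm_num at r3 r4 ⊢
  linear_combination (qPochInf (q / z) q * qPochInf (ζ * (q / z)) q *
    qPochInf (ζ ^ 2 * (q / z)) q * qPochInf (ζ ^ 3 * (q / z)) q * qPochInf (ζ ^ 4 * (q / z)) q) *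
    r3 + (qPochInf (z ^ 5) (q ^ 25) * qPochInf (z ^ 5 * q ^ 5) (q ^ 25) *
    qPochInf (z ^ 5 * q ^ 10) (q ^ 25) * qPochInf (z ^ 5 * q ^ 15) (q ^ 25) *
    qPochInf (z ^ 5 * q ^ 20) (q ^ 25)) * r4

/-- The iterated quasi-periodicity of the theta function. -/
lemma thetaJ_mul_five (hq : ‖q‖ < 1) (hq0 : q ≠ 0) {y : ℂ} (hy : y ≠ 0) :
    thetaJ (q ^ 5 * y) q = -(q ^ 10 * y ^ 5)⁻¹ * thetaJ y q := by
  have h : ∀ n : ℕ, thetaJ (q ^ (n + 1) * y) q = -(q ^ n * y)⁻¹ * thetaJ (q ^ n * y) q := by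
    intro n
    rw [pow_succ', mul_assoc, thetaJ_mul hq hq0 (mul_ne_zero (pow_ne_zero _ hq0) hy)]
  rw [h 4, h 3, h 2, h 1, h 0]
  simp only [pow_zero, one_mul]
  field_simp

/-- The inhomogeneous part of the functional equation of the Appell-type series under
`y ↦ q⁵ y`. -/
def dissM (q y : ℂ) : ℂ :=
  (1 - q ^ 9 * y ^ 2) - q ^ 13 * y ^ 3 * (1 - q ^ 7 * y ^ 2) +
    q ^ 23 * y ^ 6 * (1 - q ^ 5 * y ^ 2) - q ^ 30 * y ^ 9 * (1 - q ^ 3 * y ^ 2) +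
    q ^ 34 * y ^ 12 * (1 - q * y ^ 2)

/-- The iterated functional equation of the Appell-type numerator. -/
lemma Ehat_mul_five (hq : ‖q‖ < 1) (hq0 : q ≠ 0) {y : ℂ} (hy : y ≠ 0) :
    Ehat (q ^ 5 * y) q = q ^ 25 * (y ^ 5) ^ 2 * Ehat y q -
      (q ^ 10 * y ^ 5)⁻¹ * thetaJ y q * dissM q y := by
  have h : ∀ n : ℕ, thetaJ (q ^ (n + 1) * y) q = -(q ^ n * y)⁻¹ * thetaJ (q ^ n * y) q := by
    intro n
    rw [pow_succ', mul_assoc, thetaJ_mul hq hq0 (mul_ne_zero (pow_ne_zero _ hq0) hy)]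
  have g : ∀ n : ℕ, Ehat (q ^ (n + 1) * y) q = q * (q ^ n * y) ^ 2 * Ehat (q ^ n * y) q -
      (1 - q * (q ^ n * y) ^ 2) * (q ^ n * y)⁻¹ * thetaJ (q ^ n * y) q := by
    intro n
    rw [pow_succ', mul_assoc, Ehat_mul hq hq0 (mul_ne_zero (pow_ne_zero _ hq0) hy)]
  rw [g 4, g 3, g 2, g 1, g 0, h 3, h 2, h 1, h 0]
  simp only [pow_zero, one_mul, dissM]
  field_simp
  ring

/-- The average `(z/5) ∑ ζ^j E(ζ^j z)`, with denominators cleared by `∏ j(ζ^i z; q)`. -/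
noncomputable def dissL (ζ q z : ℂ) : ℂ :=
  z / 5 * (Ehat z q *
      (thetaJ (ζ * z) q * thetaJ (ζ ^ 2 * z) q * thetaJ (ζ ^ 3 * z) q * thetaJ (ζ ^ 4 * z) q) +
    ζ * Ehat (ζ * z) q *
      (thetaJ z q * thetaJ (ζ ^ 2 * z) q * thetaJ (ζ ^ 3 * z) q * thetaJ (ζ ^ 4 * z) q) +
    ζ ^ 2 * Ehat (ζ ^ 2 * z) q *
      (thetaJ z q * thetaJ (ζ * z) q * thetaJ (ζ ^ 3 * z) q * thetaJ (ζ ^ 4 * z) q) +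
    ζ ^ 3 * Ehat (ζ ^ 3 * z) q *
      (thetaJ z q * thetaJ (ζ * z) q * thetaJ (ζ ^ 2 * z) q * thetaJ (ζ ^ 4 * z) q) +
    ζ ^ 4 * Ehat (ζ ^ 4 * z) q *
      (thetaJ z q * thetaJ (ζ * z) q * thetaJ (ζ ^ 2 * z) q * thetaJ (ζ ^ 3 * z) q))

/-- The constant `(q²⁵;q²⁵)² j(q⁵;q²⁵) j(q¹⁰;q²⁵) / (q;q)`. -/
noncomputable def dissK (q : ℂ) : ℂ :=
  qPochInf (q ^ 25) (q ^ 25) ^ 2 * thetaJ (q ^ 5) (q ^ 25) * thetaJ (q ^ 10) (q ^ 25) / qPochInf q q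

/-- The dissected form of the average, as a function of `x = z⁵`, with denominators cleared by
`∏ j(x q^{5r}; q²⁵)`. -/
noncomputable def dissR (q x : ℂ) : ℂ :=
  (Ehat (x * q ^ 5) (q ^ 25) - thetaJ (x * q ^ 5) (q ^ 25)) *
      (thetaJ x (q ^ 25) * thetaJ (x * q ^ 10) (q ^ 25) * thetaJ (x * q ^ 15) (q ^ 25) *
        thetaJ (x * q ^ 20) (q ^ 25)) +
    dissK q * x * (thetaJ (x * q ^ 15) (q ^ 25) * thetaJ (x * q ^ 20) (q ^ 25)) +
    dissK q * q ^ 2 * (thetaJ x (q ^ 25) * thetaJ (x * q ^ 10) (q ^ 25))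

lemma dissL_root (hζ : 1 + ζ + ζ ^ 2 + ζ ^ 3 + ζ ^ 4 = 0) (z : ℂ) :
    dissL ζ q (ζ * z) = dissL ζ q z := by
  have h5 := root_pow_five hζ
  have e1 : ζ * (ζ * z) = ζ ^ 2 * z := by ring
  have e2 : ζ ^ 2 * (ζ * z) = ζ ^ 3 * z := by ring
  have e3 : ζ ^ 3 * (ζ * z) = ζ ^ 4 * z := by ring
  have e4 : ζ ^ 4 * (ζ * z) = z := by linear_combination z * h5
  simp only [dissL, e1, e2, e3, e4]
  linear_combination (z / 5 * Ehat z q *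
    (thetaJ (ζ * z) q * thetaJ (ζ ^ 2 * z) q * thetaJ (ζ ^ 3 * z) q * thetaJ (ζ ^ 4 * z) q)) * h5

lemma dissL_mul (hq : ‖q‖ < 1) (hq0 : q ≠ 0) (hζ : 1 + ζ + ζ ^ 2 + ζ ^ 3 + ζ ^ 4 = 0) {z : ℂ}
    (hz : z ≠ 0) : dissL ζ q (q ^ 5 * z) = (q ^ 10 * z ^ 10)⁻¹ * (dissL ζ q z +
      (1 + (q ^ 5 * z ^ 5)⁻¹) * (thetaJ z q * thetaJ (ζ * z) q * thetaJ (ζ ^ 2 * z) q *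
        thetaJ (ζ ^ 3 * z) q * thetaJ (ζ ^ 4 * z) q)) := by
  have h5 := root_pow_five hζ
  have hζ0 : ζ ≠ 0 := by rintro rfl; simp at h5
  have hp : ∀ n, ζ ^ n ≠ 0 := fun n => pow_ne_zero n hζ0
  have c1 : ζ * (q ^ 5 * z) = q ^ 5 * (ζ * z) := by ring
  have c2 : ζ ^ 2 * (q ^ 5 * z) = q ^ 5 * (ζ ^ 2 * z) := by ring
  have c3 : ζ ^ 3 * (q ^ 5 * z) = q ^ 5 * (ζ ^ 3 * z) := by ring
  have c4 : ζ ^ 4 * (q ^ 5 * z) = q ^ 5 * (ζ ^ 4 * z) := by ring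
  have d1 : (ζ * z) ^ 5 = z ^ 5 := by rw [mul_pow, h5, one_mul]
  have d2 : (ζ ^ 2 * z) ^ 5 = z ^ 5 := by rw [mul_pow, ← pow_mul, mul_comm 2, pow_mul, h5]; ring
  have d3 : (ζ ^ 3 * z) ^ 5 = z ^ 5 := by rw [mul_pow, ← pow_mul, mul_comm 3, pow_mul, h5]; ring
  have d4 : (ζ ^ 4 * z) ^ 5 = z ^ 5 := by rw [mul_pow, ← pow_mul, mul_comm 4, pow_mul, h5]; ring
  -- Averaging over the fifth roots of unity keeps the exponents `9` and `14` only.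
  have pw : ∀ n : ℕ, ζ ^ n = ζ ^ (n % 5) := fun n => pow_eq_pow_mod n h5
  have s2 : 1 + ζ ^ 3 + ζ ^ 6 + ζ ^ 9 + ζ ^ 12 = 0 := by
    rw [pw 6, pw 9, pw 12]
    norm_num
    linear_combination hζ
  have s3 : 1 + ζ ^ 4 + ζ ^ 8 + ζ ^ 12 + ζ ^ 16 = 0 := by
    rw [pw 8, pw 12, pw 16]
    norm_num
    linear_combination hζ
  have s5 : 1 + ζ ^ 6 + ζ ^ 12 + ζ ^ 18 + ζ ^ 24 = 0 := by
    rw [pw 6, pw 12, pw 18, pw 24]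
    norm_num
    linear_combination hζ
  have s6 : 1 + ζ ^ 7 + ζ ^ 14 + ζ ^ 21 + ζ ^ 28 = 0 := by
    rw [pw 7, pw 14, pw 21, pw 28]
    norm_num
    linear_combination hζ
  have s8 : 1 + ζ ^ 9 + ζ ^ 18 + ζ ^ 27 + ζ ^ 36 = 0 := by
    rw [pw 9, pw 18, pw 27, pw 36]
    norm_num
    linear_combination hζ
  have s9 : 1 + ζ ^ 10 + ζ ^ 20 + ζ ^ 30 + ζ ^ 40 = 5 := by
    rw [pw 10, pw 20, pw 30, pw 40]
    norm_num
  have s11 : 1 + ζ ^ 12 + ζ ^ 24 + ζ ^ 36 + ζ ^ 48 = 0 := by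
    rw [pw 12, pw 24, pw 36, pw 48]
    norm_num
    linear_combination hζ
  have s12 : 1 + ζ ^ 13 + ζ ^ 26 + ζ ^ 39 + ζ ^ 52 = 0 := by
    rw [pw 13, pw 26, pw 39, pw 52]
    norm_num
    linear_combination hζ
  have s14 : 1 + ζ ^ 15 + ζ ^ 30 + ζ ^ 45 + ζ ^ 60 = 5 := by
    rw [pw 15, pw 30, pw 45, pw 60]
    norm_num
  have hMavg : dissM q z + ζ * dissM q (ζ * z) + ζ ^ 2 * dissM q (ζ ^ 2 * z) +
      ζ ^ 3 * dissM q (ζ ^ 3 * z) + ζ ^ 4 * dissM q (ζ ^ 4 * z) =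
      -5 * (q ^ 30 * z ^ 9 + q ^ 35 * z ^ 14) := by
    simp only [dissM]
    linear_combination hζ - q ^ 9 * z ^ 2 * s2 - q ^ 13 * z ^ 3 * s3 + q ^ 20 * z ^ 5 * s5 +
      q ^ 23 * z ^ 6 * s6 - q ^ 28 * z ^ 8 * s8 - q ^ 30 * z ^ 9 * s9 + q ^ 33 * z ^ 11 * s11 +
      q ^ 34 * z ^ 12 * s12 - q ^ 35 * z ^ 14 * s14
  simp only [dissL, c1, c2, c3, c4]
  rw [thetaJ_mul_five hq hq0 hz, thetaJ_mul_five hq hq0 (mul_ne_zero hζ0 hz),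
    thetaJ_mul_five hq hq0 (mul_ne_zero (hp 2) hz), thetaJ_mul_five hq hq0 (mul_ne_zero (hp 3) hz),
    thetaJ_mul_five hq hq0 (mul_ne_zero (hp 4) hz),
    Ehat_mul_five hq hq0 hz, Ehat_mul_five hq hq0 (mul_ne_zero hζ0 hz),
    Ehat_mul_five hq hq0 (mul_ne_zero (hp 2) hz), Ehat_mul_five hq hq0 (mul_ne_zero (hp 3) hz),
    Ehat_mul_five hq hq0 (mul_ne_zero (hp 4) hz)]
  simp only [d1, d2, d3, d4]
  have u1 : q ^ 5 * z * (q ^ 25 * (z ^ 5) ^ 2) * ((q ^ 10 * z ^ 5)⁻¹) ^ 4 =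
      (q ^ 10 * z ^ 10)⁻¹ * z := by field_simp
  have u2 : q ^ 5 * z * ((q ^ 10 * z ^ 5)⁻¹) ^ 5 * (q ^ 30 * z ^ 9 + q ^ 35 * z ^ 14) =
      (q ^ 10 * z ^ 10)⁻¹ * (1 + (q ^ 5 * z ^ 5)⁻¹) := by field_simp; ring
  generalize (q ^ 10 * z ^ 5)⁻¹ = u at *
  generalize (q ^ 10 * z ^ 10)⁻¹ = v at *
  generalize (q ^ 5 * z ^ 5)⁻¹ = v' at *
  generalize thetaJ z q = t0
  generalize thetaJ (ζ * z) q = t1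
  generalize thetaJ (ζ ^ 2 * z) q = t2
  generalize thetaJ (ζ ^ 3 * z) q = t3
  generalize thetaJ (ζ ^ 4 * z) q = t4
  linear_combination (-(q ^ 5 * z / 5) * u ^ 5 * (t0 * t1 * t2 * t3 * t4)) * hMavg +
    (Ehat z q * (t1 * t2 * t3 * t4) + ζ * Ehat (ζ * z) q * (t0 * t2 * t3 * t4) +
      ζ ^ 2 * Ehat (ζ ^ 2 * z) q * (t0 * t1 * t3 * t4) +
      ζ ^ 3 * Ehat (ζ ^ 3 * z) q * (t0 * t1 * t2 * t4) +
      ζ ^ 4 * Ehat (ζ ^ 4 * z) q * (t0 * t1 * t2 * t3)) / 5 * u1 +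
    (t0 * t1 * t2 * t3 * t4) * u2

lemma dissR_mul (hq : ‖q‖ < 1) (hq0 : q ≠ 0) {x : ℂ} (hx : x ≠ 0) :
    dissR q (q ^ 25 * x) = (q ^ 10 * x ^ 2)⁻¹ * (dissR q x +
      (1 + (q ^ 5 * x)⁻¹) * (thetaJ x (q ^ 25) * thetaJ (x * q ^ 5) (q ^ 25) *
        thetaJ (x * q ^ 10) (q ^ 25) * thetaJ (x * q ^ 15) (q ^ 25) *
        thetaJ (x * q ^ 20) (q ^ 25))) := by
  have hP := norm_pow_lt_one hq (n := 25) (by norm_num)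
  have hP0 : q ^ 25 ≠ 0 := pow_ne_zero _ hq0
  have hn : ∀ n, x * q ^ n ≠ 0 := fun n => mul_ne_zero hx (pow_ne_zero n hq0)
  simp only [dissR, mul_assoc (q ^ 25) x]
  rw [Ehat_mul hP hP0 (hn 5), thetaJ_mul hP hP0 hx, thetaJ_mul hP hP0 (hn 5),
    thetaJ_mul hP hP0 (hn 10), thetaJ_mul hP hP0 (hn 15), thetaJ_mul hP hP0 (hn 20)]
  generalize thetaJ x (q ^ 25) = a0
  generalize thetaJ (x * q ^ 5) (q ^ 25) = a1
  generalize thetaJ (x * q ^ 10) (q ^ 25) = a2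
  generalize thetaJ (x * q ^ 15) (q ^ 25) = a3
  generalize thetaJ (x * q ^ 20) (q ^ 25) = a4
  field_simp
  ring

/-- `∏_{i=1}^4 j(ζ^i; q) = 5 (q⁵;q⁵)² / (q;q)²`. -/
lemma thetaJ_root_prod (hq : ‖q‖ < 1) (hq0 : q ≠ 0) (hζ : 1 + ζ + ζ ^ 2 + ζ ^ 3 + ζ ^ 4 = 0) :
    qPochInf q q ^ 2 *
      (thetaJ ζ q * thetaJ (ζ ^ 2) q * thetaJ (ζ ^ 3) q * thetaJ (ζ ^ 4) q) =
    5 * (qPochInf (q ^ 25) (q ^ 25) * thetaJ (q ^ 5) (q ^ 25) * thetaJ (q ^ 10) (q ^ 25)) ^ 2 := by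
  have h5 := root_pow_five hζ
  have hζ0 : ζ ≠ 0 := by rintro rfl; simp at h5
  have r := qPochInf_root hq hζ q
  have r3 := qPochInf_five (norm_pow_lt_one hq (n := 5) (by norm_num)) (q ^ 5)
  rw [← r] at r3
  have h : (1 - ζ) * (1 - ζ ^ 2) * (1 - ζ ^ 3) * (1 - ζ ^ 4) = 5 := by
    linear_combination (ζ ^ 6 - 2 * ζ ^ 5 + ζ ^ 3 + 3 * ζ - 4) * hζ
  rw [thetaJ_eq hq, thetaJ_eq hq, thetaJ_eq hq, thetaJ_eq hq]
  simp only [thetaJ0, thetaJ]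
  have e1 : q / ζ = ζ ^ 4 * q := by field_simp; rw [h5]
  have e2 : q / ζ ^ 2 = ζ ^ 3 * q := by field_simp; rw [h5]
  have e3 : q / ζ ^ 3 = ζ ^ 2 * q := by field_simp; rw [h5]
  have e4 : q / ζ ^ 4 = ζ * q := by field_simp; rw [h5]
  have f1 : q ^ 25 / q ^ 5 = q ^ 20 := by field_simp
  have f2 : q ^ 25 / q ^ 10 = q ^ 15 := by field_simp
  rw [e1, e2, e3, e4, f1, f2]
  simp only [← pow_mul, ← pow_add] at r3
  norm_num at r3
  generalize qPochInf q q = g0 at *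
  generalize qPochInf (ζ * q) q = g1 at *
  generalize qPochInf (ζ ^ 2 * q) q = g2 at *
  generalize qPochInf (ζ ^ 3 * q) q = g3 at *
  generalize qPochInf (ζ ^ 4 * q) q = g4 at *
  generalize qPochInf (q ^ 5) (q ^ 25) = h1 at *
  generalize qPochInf (q ^ 10) (q ^ 25) = h2 at *
  generalize qPochInf (q ^ 15) (q ^ 25) = h3 at *
  generalize qPochInf (q ^ 20) (q ^ 25) = h4 at *
  generalize qPochInf (q ^ 25) (q ^ 25) = h0 at *
  linear_combination (g0 * g1 * g2 * g3 * g4) ^ 2 * h +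
    5 * (g0 * g1 * g2 * g3 * g4 + h0 * h1 * h2 * h3 * h4) * r3

lemma thetaJ_div_q (hq : ‖q‖ < 1) (hq0 : q ≠ 0) {x : ℂ} (hx : x ≠ 0) :
    thetaJ (x / q) q = -(x / q) * thetaJ x q := by
  have h := thetaJ_mul hq hq0 (div_ne_zero hx hq0)
  rw [mul_div_cancel₀ _ hq0] at h
  rw [h]; field_simp

lemma dissL_one (hq : ‖q‖ < 1) : dissL ζ q 1 = 1 / 5 * (qPochInf q q *
    (thetaJ ζ q * thetaJ (ζ ^ 2) q * thetaJ (ζ ^ 3) q * thetaJ (ζ ^ 4) q)) := by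
  simp [dissL, thetaJ_one hq, Ehat_one hq]

lemma dissL_q (hq : ‖q‖ < 1) (hq0 : q ≠ 0) (hζ : 1 + ζ + ζ ^ 2 + ζ ^ 3 + ζ ^ 4 = 0) :
    dissL ζ q q = q ^ 2 * dissL ζ q 1 := by
  have h5 := root_pow_five hζ
  have hζ0 : ζ ≠ 0 := by rintro rfl; simp at h5
  have h0 : thetaJ q q = 0 := (thetaJ_eq_zero_iff hq hq0 hq0).2 ⟨1, by simp⟩
  have hE := Ehat_zpow hq hq0 1
  simp only [zpow_one, one_pow] at hE
  rw [dissL_one hq, dissL, h0, hE, mul_comm ζ, mul_comm (ζ ^ 2), mul_comm (ζ ^ 3), mul_comm (ζ ^ 4),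
    thetaJ_mul hq hq0 hζ0, thetaJ_mul hq hq0 (pow_ne_zero _ hζ0),
    thetaJ_mul hq hq0 (pow_ne_zero _ hζ0), thetaJ_mul hq hq0 (pow_ne_zero _ hζ0)]
  generalize thetaJ ζ q = t1
  generalize thetaJ (ζ ^ 2) q = t2
  generalize thetaJ (ζ ^ 3) q = t3
  generalize thetaJ (ζ ^ 4) q = t4
  generalize qPochInf q q = g
  field_simp
  linear_combination (-(g * q * t1 * t2 * t3 * t4) * (ζ ^ 5 + 1)) * h5

lemma dissL_inv (hq : ‖q‖ < 1) (hq0 : q ≠ 0) (hζ : 1 + ζ + ζ ^ 2 + ζ ^ 3 + ζ ^ 4 = 0) :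
    dissL ζ q (1 / q) = (q ^ 4)⁻¹ * dissL ζ q 1 := by
  have h5 := root_pow_five hζ
  have hζ0 : ζ ≠ 0 := by rintro rfl; simp at h5
  have h0 : thetaJ (1 / q) q = 0 :=
    (thetaJ_eq_zero_iff hq hq0 (one_div_ne_zero hq0)).2 ⟨-1, by simp⟩
  have hE := Ehat_zpow hq hq0 (-1)
  simp only [zpow_neg_one, neg_sq, one_pow, zpow_one] at hE
  rw [← one_div] at hE
  rw [dissL_one hq, dissL, h0, hE, mul_one_div, mul_one_div, mul_one_div, mul_one_div,
    thetaJ_div_q hq hq0 hζ0, thetaJ_div_q hq hq0 (pow_ne_zero _ hζ0),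
    thetaJ_div_q hq hq0 (pow_ne_zero _ hζ0), thetaJ_div_q hq hq0 (pow_ne_zero _ hζ0)]
  generalize thetaJ ζ q = t1
  generalize thetaJ (ζ ^ 2) q = t2
  generalize thetaJ (ζ ^ 3) q = t3
  generalize thetaJ (ζ ^ 4) q = t4
  generalize qPochInf q q = g
  field_simp
  linear_combination (g * t1 * t2 * t3 * t4 * (ζ ^ 5 + 1)) * h5

lemma dissL_inv_sq (hq : ‖q‖ < 1) (hq0 : q ≠ 0) (hζ : 1 + ζ + ζ ^ 2 + ζ ^ 3 + ζ ^ 4 = 0) :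
    dissL ζ q (1 / q / q) = (q ^ 10)⁻¹ * dissL ζ q 1 := by
  have h5 := root_pow_five hζ
  have hζ0 : ζ ≠ 0 := by rintro rfl; simp at h5
  have hzz : (1 : ℂ) / q / q = q ^ (-2 : ℤ) := by
    rw [zpow_neg, div_div, ← sq, one_div]; norm_cast
  have h0 : thetaJ (1 / q / q) q = 0 :=
    (thetaJ_eq_zero_iff hq hq0 (div_ne_zero (one_div_ne_zero hq0) hq0)).2 ⟨-2, hzz⟩
  have hE := Ehat_zpow hq hq0 (-2)
  rw [← hzz, show ((-2 : ℤ) ^ 2) = ((4 : ℕ) : ℤ) by norm_num, zpow_natCast] at hE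
  have hn : ∀ n, ζ ^ n / q ≠ 0 := fun n => div_ne_zero (pow_ne_zero _ hζ0) hq0
  have hn1 : ζ / q ≠ 0 := div_ne_zero hζ0 hq0
  have e : ∀ y : ℂ, y * (1 / q / q) = y / q / q := fun y => by ring
  rw [dissL_one hq, dissL, h0, hE, e, e, e, e, thetaJ_div_q hq hq0 hn1,
    thetaJ_div_q hq hq0 (hn _), thetaJ_div_q hq hq0 (hn _), thetaJ_div_q hq hq0 (hn _),
    thetaJ_div_q hq hq0 hζ0, thetaJ_div_q hq hq0 (pow_ne_zero _ hζ0),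
    thetaJ_div_q hq hq0 (pow_ne_zero _ hζ0), thetaJ_div_q hq hq0 (pow_ne_zero _ hζ0)]
  generalize thetaJ ζ q = t1
  generalize thetaJ (ζ ^ 2) q = t2
  generalize thetaJ (ζ ^ 3) q = t3
  generalize thetaJ (ζ ^ 4) q = t4
  generalize qPochInf q q = g
  field_simp
  linear_combination (q * g * t1 * t2 * t3 * t4 * (ζ ^ 15 + ζ ^ 10 + ζ ^ 5 + 1)) * h5

lemma dissL_one_eq (hq : ‖q‖ < 1) (hq0 : q ≠ 0) (hζ : 1 + ζ + ζ ^ 2 + ζ ^ 3 + ζ ^ 4 = 0) :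
    dissL ζ q 1 = dissK q * (thetaJ (q ^ 5) (q ^ 25) * thetaJ (q ^ 10) (q ^ 25)) := by
  have h := thetaJ_root_prod hq hq0 hζ
  have h0 := qPochInf_self_ne_zero hq
  rw [dissL_one hq, dissK]
  generalize thetaJ ζ q * thetaJ (ζ ^ 2) q * thetaJ (ζ ^ 3) q * thetaJ (ζ ^ 4) q = T at *
  generalize thetaJ (q ^ 5) (q ^ 25) = j1 at *
  generalize thetaJ (q ^ 10) (q ^ 25) = j2 at *
  generalize qPochInf (q ^ 25) (q ^ 25) = cP at *
  generalize qPochInf q q = g at *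
  field_simp
  linear_combination h

lemma thetaJ_q15 (hq0 : q ≠ 0) : thetaJ (q ^ 15) (q ^ 25) = thetaJ (q ^ 10) (q ^ 25) := by
  have e : q ^ 25 / q ^ 10 = q ^ 15 := by field_simp
  rw [← thetaJ_q_div (pow_ne_zero 25 hq0) (q ^ 10), e]

lemma thetaJ_q20 (hq0 : q ≠ 0) : thetaJ (q ^ 20) (q ^ 25) = thetaJ (q ^ 5) (q ^ 25) := by
  have e : q ^ 25 / q ^ 5 = q ^ 20 := by field_simp
  rw [← thetaJ_q_div (pow_ne_zero 25 hq0) (q ^ 5), e]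

lemma dissR_one (hq : ‖q‖ < 1) (hq0 : q ≠ 0) :
    dissR q 1 = dissK q * (thetaJ (q ^ 5) (q ^ 25) * thetaJ (q ^ 10) (q ^ 25)) := by
  have hP := norm_pow_lt_one hq (n := 25) (by norm_num)
  simp only [dissR, one_mul, thetaJ_one hP, thetaJ_q15 hq0, thetaJ_q20 hq0]
  ring

lemma dissR_q5 (hq : ‖q‖ < 1) (hq0 : q ≠ 0) : dissR q (q ^ 5) = q ^ 2 * (dissK q *
    (thetaJ (q ^ 5) (q ^ 25) * thetaJ (q ^ 10) (q ^ 25))) := by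
  have hP := norm_pow_lt_one hq (n := 25) (by norm_num)
  have hP0 : q ^ 25 ≠ 0 := pow_ne_zero _ hq0
  have h0 : thetaJ (q ^ 25) (q ^ 25) = 0 := (thetaJ_eq_zero_iff hP hP0 hP0).2 ⟨1, by simp⟩
  simp only [dissR, ← pow_add]
  norm_num
  rw [h0, thetaJ_q15 hq0]
  ring

lemma thetaJ_inv_q5 (hq : ‖q‖ < 1) (hq0 : q ≠ 0) :
    thetaJ (1 / q ^ 5) (q ^ 25) = -(1 / q ^ 5) * thetaJ (q ^ 5) (q ^ 25) := by
  rw [one_div, thetaJ_inv (norm_pow_lt_one hq (by norm_num)) (pow_ne_zero _ hq0)]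

lemma dissR_inv (hq : ‖q‖ < 1) (hq0 : q ≠ 0) : dissR q (1 / q ^ 5) =
    -(qPochInf (q ^ 25) (q ^ 25)) * (q ^ 5)⁻¹ *
      (thetaJ (q ^ 5) (q ^ 25) * thetaJ (q ^ 10) (q ^ 25)) ^ 2 +
    dissK q * (q ^ 5)⁻¹ * thetaJ (q ^ 10) (q ^ 25) ^ 2 -
    dissK q * (q ^ 3)⁻¹ * thetaJ (q ^ 5) (q ^ 25) ^ 2 := by
  have hP := norm_pow_lt_one hq (n := 25) (by norm_num)
  have e1 : 1 / q ^ 5 * q ^ 5 = 1 := by field_simp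
  have e2 : 1 / q ^ 5 * q ^ 10 = q ^ 5 := by field_simp
  have e3 : 1 / q ^ 5 * q ^ 15 = q ^ 10 := by field_simp
  have e4 : 1 / q ^ 5 * q ^ 20 = q ^ 15 := by field_simp
  simp only [dissR, e1, e2, e3, e4, thetaJ_one hP, thetaJ_q15 hq0, Ehat_one hP,
    thetaJ_inv_q5 hq hq0]
  field_simp
  ring

lemma dissR_inv_sq (hq : ‖q‖ < 1) (hq0 : q ≠ 0) : dissR q (1 / q ^ 10) = (q ^ 10)⁻¹ * (dissK q *
    (thetaJ (q ^ 5) (q ^ 25) * thetaJ (q ^ 10) (q ^ 25))) := by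
  have hP := norm_pow_lt_one hq (n := 25) (by norm_num)
  have e1 : 1 / q ^ 10 * q ^ 5 = 1 / q ^ 5 := by field_simp
  have e2 : 1 / q ^ 10 * q ^ 10 = 1 := by field_simp
  have e3 : 1 / q ^ 10 * q ^ 15 = q ^ 5 := by field_simp
  have e4 : 1 / q ^ 10 * q ^ 20 = q ^ 10 := by field_simp
  simp only [dissR, e1, e2, e3, e4, thetaJ_one hP]
  field_simp
  ring

lemma differentiableOn_dissL (hq : ‖q‖ < 1) (hζ0 : ζ ≠ 0) :
    DifferentiableOn ℂ (fun z => dissL ζ q z) {0}ᶜ := by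
  have hE := differentiableOn_Ehat hq
  have hmaps : ∀ n : ℕ, Set.MapsTo (fun z => ζ ^ n * z) {0}ᶜ ({0}ᶜ : Set ℂ) := fun n z hz =>
    mul_ne_zero (pow_ne_zero n hζ0) hz
  have hlin : ∀ n : ℕ, DifferentiableOn ℂ (fun z => ζ ^ n * z) ({0}ᶜ : Set ℂ) := fun n => by
    fun_prop
  have hT : DifferentiableOn ℂ (fun z => thetaJ z q) {0}ᶜ := fun z hz =>
    (differentiableAt_thetaJ hq hz).differentiableWithinAt
  have E : ∀ n : ℕ, DifferentiableOn ℂ (fun z => Ehat (ζ ^ n * z) q) {0}ᶜ := fun n =>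
    hE.comp (hlin n) (hmaps n)
  have T : ∀ n : ℕ, DifferentiableOn ℂ (fun z => thetaJ (ζ ^ n * z) q) {0}ᶜ := fun n =>
    hT.comp (hlin n) (hmaps n)
  have E1 := E 1
  have T1 := T 1
  simp only [pow_one] at E1 T1
  have hz : DifferentiableOn ℂ (fun z : ℂ => z / 5) {0}ᶜ := by fun_prop
  exact hz.mul (((((hE.mul (((T1.mul (T 2)).mul (T 3)).mul (T 4))).add
    ((E1.const_mul ζ).mul (((hT.mul (T 2)).mul (T 3)).mul (T 4)))).add
    (((E 2).const_mul (ζ ^ 2)).mul (((hT.mul T1).mul (T 3)).mul (T 4)))).add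
    (((E 3).const_mul (ζ ^ 3)).mul (((hT.mul T1).mul (T 2)).mul (T 4)))).add
    (((E 4).const_mul (ζ ^ 4)).mul (((hT.mul T1).mul (T 2)).mul (T 3))))

lemma differentiableOn_dissR (hq : ‖q‖ < 1) (hq0 : q ≠ 0) :
    DifferentiableOn ℂ (fun z => dissR q (z ^ 5)) {0}ᶜ := by
  have hP := norm_pow_lt_one hq (n := 25) (by norm_num)
  have hE := differentiableOn_Ehat hP
  have hmaps : ∀ n : ℕ, Set.MapsTo (fun z => z ^ 5 * q ^ n) {0}ᶜ ({0}ᶜ : Set ℂ) := fun n z hz =>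
    mul_ne_zero (pow_ne_zero 5 hz) (pow_ne_zero n hq0)
  have hlin : ∀ n : ℕ, DifferentiableOn ℂ (fun z => z ^ 5 * q ^ n) ({0}ᶜ : Set ℂ) := fun n => by
    fun_prop
  have hT : DifferentiableOn ℂ (fun z => thetaJ z (q ^ 25)) {0}ᶜ := fun z hz =>
    (differentiableAt_thetaJ hP hz).differentiableWithinAt
  have E1 : DifferentiableOn ℂ (fun z => Ehat (z ^ 5 * q ^ 5) (q ^ 25)) {0}ᶜ :=
    hE.comp (hlin 5) (hmaps 5)
  have T : ∀ n : ℕ, DifferentiableOn ℂ (fun z => thetaJ (z ^ 5 * q ^ n) (q ^ 25)) {0}ᶜ := fun n =>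
    hT.comp (hlin n) (hmaps n)
  have T0 := T 0
  simp only [pow_zero, mul_one] at T0
  have hz : DifferentiableOn ℂ (fun z : ℂ => dissK q * z ^ 5) {0}ᶜ := by fun_prop
  exact (((E1.sub (T 5)).mul (((T0.mul (T 10)).mul (T 15)).mul (T 20))).add
    (hz.mul ((T 15).mul (T 20)))).add ((T0.mul (T 10)).const_mul (dissK q * q ^ 2))

lemma dissL_eq_dissR_zpow (hq : ‖q‖ < 1) (hq0 : q ≠ 0) (hζ : 1 + ζ + ζ ^ 2 + ζ ^ 3 + ζ ^ 4 = 0)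
    (m : ℤ) (hm : m ∈ ({0, 1, -2} : Finset ℤ)) :
    dissL ζ q (q ^ m) = dissR q ((q ^ m) ^ 5) := by
  simp only [Finset.mem_insert, Finset.mem_singleton] at hm
  rcases hm with rfl | rfl | rfl
  · rw [zpow_zero, one_pow, dissL_one_eq hq hq0 hζ, dissR_one hq hq0]
  · rw [zpow_one, dissL_q hq hq0 hζ, dissL_one_eq hq hq0 hζ, dissR_q5 hq hq0]
  · have hzz : q ^ (-2 : ℤ) = 1 / q / q := by
      rw [zpow_neg, div_div, ← sq, one_div]; norm_cast
    have e : (1 / q / q) ^ 5 = 1 / q ^ 10 := by field_simp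
    rw [hzz, dissL_inv_sq hq hq0 hζ, dissL_one_eq hq hq0 hζ, e, dissR_inv_sq hq hq0]

lemma dissL_sub_dissR_mul (hq : ‖q‖ < 1) (hq0 : q ≠ 0) (hζ : 1 + ζ + ζ ^ 2 + ζ ^ 3 + ζ ^ 4 = 0)
    {z : ℂ} (hz : z ≠ 0) : dissL ζ q (q ^ 5 * z) - dissR q ((q ^ 5 * z) ^ 5) =
      (q ^ 10)⁻¹ * z ^ (-(10 : ℤ)) * (dissL ζ q z - dissR q (z ^ 5)) := by
  have e1 : (q ^ 5 * z) ^ 5 = q ^ 25 * z ^ 5 := by ring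
  have e2 : z ^ (-(10 : ℤ)) = (z ^ 10)⁻¹ := by rw [zpow_neg]; norm_cast
  have e3 : (q ^ 10 * (z ^ 5) ^ 2)⁻¹ = (q ^ 10)⁻¹ * (z ^ 10)⁻¹ := by rw [← pow_mul, mul_inv]
  rw [dissL_mul hq hq0 hζ hz, thetaJ_prod hq hq0 hζ hz, e1, dissR_mul hq hq0 (pow_ne_zero 5 hz),
    e2, e3, mul_inv]
  ring

/-- The dissection identity, with denominators cleared. The difference of the two sides is a theta
function of degree `10` for the nome `q⁵`, and it vanishes at the fifteen points `ζ^j q^m`,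
`m ∈ {0, 1, -2}`, which are distinct modulo `q^{5ℤ}`. -/
lemma dissL_eq_dissR (hq : ‖q‖ < 1) (hq0 : q ≠ 0) (hζ : 1 + ζ + ζ ^ 2 + ζ ^ 3 + ζ ^ 4 = 0) {z : ℂ}
    (hz : z ≠ 0) : dissL ζ q z = dissR q (z ^ 5) := by
  classical
  have h5 := root_pow_five hζ
  have hζ0 : ζ ≠ 0 := by rintro rfl; simp at h5
  have hq5 := norm_pow_lt_one hq (n := 5) (by norm_num)
  have hprim : IsPrimitiveRoot ζ 5 := by
    have : Fact (Nat.Prime 5) := ⟨by norm_num⟩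
    refine IsPrimitiveRoot.iff_orderOf.2 (orderOf_eq_prime h5 ?_)
    rintro rfl
    norm_num at hζ
  have hζn : ‖ζ‖ = 1 := by
    have : ‖ζ‖ ^ 5 = 1 := by rw [← norm_pow, h5, norm_one]
    exact (pow_eq_one_iff_of_nonneg (norm_nonneg _) (by norm_num)).1 this
  set S : Finset ℂ := (Finset.range 5 ×ˢ ({0, 1, -2} : Finset ℤ)).image
    fun x => ζ ^ x.1 * q ^ x.2 with hS
  have hqn : 0 < ‖q‖ := norm_pos_iff.2 hq0
  have hexp : ∀ a b : ℤ, ‖q‖ ^ a = ‖q‖ ^ b → a = b := fun a b h =>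
    zpow_right_injective₀ hqn hq.ne h
  have hdist : ∀ i < 5, ∀ j < 5, ∀ m ∈ ({0, 1, -2} : Finset ℤ), ∀ l ∈ ({0, 1, -2} : Finset ℤ),
      ∀ n : ℤ, ζ ^ i * q ^ m = ζ ^ j * q ^ l * (q ^ 5) ^ n → i = j ∧ m = l := by
    intro i hi j hj m hm l hl n h
    have h1 := congrArg norm h
    simp only [norm_mul, norm_pow, norm_zpow, hζn, one_pow, one_mul] at h1
    have h2 := hexp m (l + 5 * n) (by
      rw [h1, zpow_add₀ hqn.ne', zpow_mul]; norm_cast)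
    have h3 : m = l := by
      simp only [Finset.mem_insert, Finset.mem_singleton] at hm hl
      omega
    have h4 : n = 0 := by omega
    subst h3 h4
    rw [zpow_zero, mul_one] at h
    exact ⟨hprim.pow_inj hi hj (mul_right_cancel₀ (zpow_ne_zero _ hq0) h), rfl⟩
  have hcard : S.card = 15 := by
    rw [hS, Finset.card_image_of_injOn]
    · simp
    · rintro ⟨i, m⟩ hx ⟨j, l⟩ hy h
      simp only [Finset.coe_product, Set.mem_prod, Finset.mem_coe, Finset.mem_range] at hx hy
      obtain ⟨h1, h2⟩ := hdist i hx.1 j hy.1 m hx.2 l hy.2 0 (by simpa using h)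
      rw [h1, h2]
  have hdiff : DifferentiableOn ℂ (fun z => dissL ζ q z - dissR q (z ^ 5)) {0}ᶜ :=
    (differentiableOn_dissL hq hζ0).sub (differentiableOn_dissR hq hq0)
  have hval : ∀ m ∈ ({0, 1, -2} : Finset ℤ), dissL ζ q (q ^ m) = dissR q ((q ^ m) ^ 5) :=
    dissL_eq_dissR_zpow hq hq0 hζ
  have hvalζ : ∀ (i : ℕ) (w : ℂ), dissL ζ q w = dissR q (w ^ 5) →
      dissL ζ q (ζ ^ i * w) = dissR q ((ζ ^ i * w) ^ 5) := by
    intro i w hw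
    rw [mul_pow, ← pow_mul, mul_comm i, pow_mul, h5, one_pow, one_mul, ← hw]
    induction i with
    | zero => simp
    | succ i ih => rw [pow_succ', mul_assoc, dissL_root hζ, ih]
  have h := multiplier_zeros hq5 (pow_ne_zero 5 hq0) S
    (fun a ha => by
      obtain ⟨x, -, rfl⟩ := Finset.mem_image.1 ha
      exact mul_ne_zero (pow_ne_zero _ hζ0) (zpow_ne_zero _ hq0))
    (fun a ha b hb n hab => by
      obtain ⟨⟨i, m⟩, hx, rfl⟩ := Finset.mem_image.1 ha
      obtain ⟨⟨j, l⟩, hy, rfl⟩ := Finset.mem_image.1 hb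
      simp only [Finset.mem_product, Finset.mem_range] at hx hy
      obtain ⟨h1, h2⟩ := hdist i hx.1 j hy.1 m hx.2 l hy.2 n hab
      simp only [h1, h2])
    hdiff (k := 10) (by rw [hcard]; norm_num) (c := (q ^ 10)⁻¹) (by simp [hq0])
    (fun x hx => dissL_sub_dissR_mul hq hq0 hζ hx)
    (fun a ha => by
      obtain ⟨⟨i, m⟩, hx, rfl⟩ := Finset.mem_image.1 ha
      simp only [Finset.mem_product] at hx
      exact sub_eq_zero.2 (hvalζ i _ (hval m hx.2)))
    hz
  exact sub_eq_zero.1 h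

lemma thetaJ_pow_ne_zero (hq : ‖q‖ < 1) (hq0 : q ≠ 0) {r : ℕ} (h0 : 0 < r) (h25 : r < 25) :
    thetaJ (q ^ r) (q ^ 25) ≠ 0 := by
  have hP := norm_pow_lt_one hq (n := 25) (by norm_num)
  have hP0 : q ^ 25 ≠ 0 := pow_ne_zero _ hq0
  have hqn : 0 < ‖q‖ := norm_pos_iff.2 hq0
  rw [Ne, thetaJ_eq_zero_iff hP hP0 (pow_ne_zero _ hq0)]
  rintro ⟨n, hn⟩
  have h1 := congrArg norm hn
  simp only [norm_pow, norm_zpow] at h1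
  have h2 := zpow_right_injective₀ hqn hq.ne (show ‖q‖ ^ (r : ℤ) = ‖q‖ ^ (25 * n) by
    rw [zpow_mul, zpow_natCast, h1]; norm_cast)
  omega

/-- Ramanujan's quintic dissection of Euler's product:
`(q;q)_∞ / (q²⁵;q²⁵)_∞ = t - q - q² / t` with `t = j(q¹⁰;q²⁵) / j(q⁵;q²⁵)`. It is the value of the
dissection identity at `z = q⁻¹`. -/
lemma euler_dissection (hq : ‖q‖ < 1) (hq0 : q ≠ 0)
    (hζ : 1 + ζ + ζ ^ 2 + ζ ^ 3 + ζ ^ 4 = 0) :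
    qPochInf q q * thetaJ (q ^ 5) (q ^ 25) * thetaJ (q ^ 10) (q ^ 25) =
      qPochInf (q ^ 25) (q ^ 25) * (thetaJ (q ^ 10) (q ^ 25) ^ 2 -
        q * thetaJ (q ^ 5) (q ^ 25) * thetaJ (q ^ 10) (q ^ 25) -
        q ^ 2 * thetaJ (q ^ 5) (q ^ 25) ^ 2) := by
  have hP := norm_pow_lt_one hq (n := 25) (by norm_num)
  have hP0 : q ^ 25 ≠ 0 := pow_ne_zero _ hq0
  have h := dissL_eq_dissR hq hq0 hζ (one_div_ne_zero hq0)
  rw [dissL_inv hq hq0 hζ, dissL_one_eq hq hq0 hζ, one_div_pow, dissR_inv hq hq0, dissK] at h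
  have hc := qPochInf_self_ne_zero hq
  have hcP := qPochInf_self_ne_zero hP
  have h1 := thetaJ_pow_ne_zero hq hq0 (r := 5) (by norm_num) (by norm_num)
  have h2 := thetaJ_pow_ne_zero hq hq0 (r := 10) (by norm_num) (by norm_num)
  generalize thetaJ (q ^ 5) (q ^ 25) = j1 at *
  generalize thetaJ (q ^ 10) (q ^ 25) = j2 at *
  generalize qPochInf (q ^ 25) (q ^ 25) = cP at *
  generalize qPochInf q q = c at *
  have h3 : cP * j1 * j2 * (q * cP * j1 * j2 + c * j1 * j2 - cP * j2 ^ 2 + q ^ 2 * cP * j1 ^ 2)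
      = 0 := by
    field_simp at h
    linear_combination cP * j1 * j2 * h
  have h4 := (mul_eq_zero.1 h3).resolve_left (mul_ne_zero (mul_ne_zero hcP h1) h2)
  linear_combination h4

end Dissection

/-! ### A theta function identity and logarithmic derivatives -/

section Eisenstein
variable {w : ℂ}

/-- The identity `j(xa)³ j(a³/x) - x² j(a/x)³ j(xa³) = j(a²)³ j(x²)` for the nome `Q = w¹⁰` and
`a = w^m`. The difference of the two sides is a theta function of degree `4` that vanishes at the
five points `1, -1, a, a⁻¹, Q^{1/2}`. -/
lemma thetaJ_cubic (hw : ‖w‖ < 1) (hw0 : w ≠ 0) {m : ℕ} (hm0 : 0 < m) (hm5 : m < 5) {x : ℂ}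
    (hx : x ≠ 0) :
    thetaJ (x * w ^ m) (w ^ 10) ^ 3 * thetaJ ((w ^ m) ^ 3 / x) (w ^ 10) -
      x ^ 2 * thetaJ (w ^ m / x) (w ^ 10) ^ 3 * thetaJ (x * (w ^ m) ^ 3) (w ^ 10) -
      thetaJ ((w ^ m) ^ 2) (w ^ 10) ^ 3 * thetaJ (x ^ 2) (w ^ 10) = 0 := by
  classical
  have hQ : ‖w ^ 10‖ < 1 := norm_pow_lt_one hw (by norm_num)
  have hQ0 : w ^ 10 ≠ 0 := pow_ne_zero _ hw0
  have hwn : 0 < ‖w‖ := norm_pos_iff.2 hw0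
  have ha0 : w ^ m ≠ 0 := pow_ne_zero _ hw0
  have hT : ∀ y : ℂ, y ≠ 0 → DifferentiableAt ℂ (fun y => thetaJ y (w ^ 10)) y := fun y hy =>
    differentiableAt_thetaJ hQ hy
  set T : Finset (ℕ × ℤ) := {(0, 0), (1, 0), (0, (m : ℤ)), (0, -(m : ℤ)), (0, 5)} with hTdef
  set S : Finset ℂ := T.image fun e => (-1) ^ e.1 * w ^ e.2 with hS
  have hdist : ∀ e ∈ T, ∀ f ∈ T, ∀ n : ℤ,
      ((-1 : ℂ) ^ e.1 * w ^ e.2 = (-1) ^ f.1 * w ^ f.2 * (w ^ 10) ^ n) → e = f := by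
    intro e he f hf n h
    have h1 := congrArg norm h
    simp only [norm_mul, norm_pow, norm_zpow, norm_neg, norm_one, one_pow, one_mul] at h1
    have h2 : e.2 = f.2 + 10 * n := zpow_right_injective₀ hwn hw.ne (by
      change ‖w‖ ^ e.2 = ‖w‖ ^ (f.2 + 10 * n)
      rw [h1, zpow_add₀ hwn.ne', zpow_mul]; norm_cast)
    have h3 : e.2 = f.2 := by
      simp only [hTdef, Finset.mem_insert, Finset.mem_singleton] at he hf
      rcases he with rfl | rfl | rfl | rfl | rfl <;>
        rcases hf with rfl | rfl | rfl | rfl | rfl <;> simp only at h2 ⊢ <;> omega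
    have h4 : n = 0 := by omega
    rw [h4, zpow_zero, mul_one, h3] at h
    have h5 := mul_right_cancel₀ (zpow_ne_zero _ hw0) h
    have h6 : e.1 = f.1 := by
      simp only [hTdef, Finset.mem_insert, Finset.mem_singleton] at he hf
      rcases he with rfl | rfl | rfl | rfl | rfl <;>
        rcases hf with rfl | rfl | rfl | rfl | rfl <;> first | rfl | (norm_num at h5)
    exact Prod.ext h6 h3
  have hcard : S.card = 5 := by
    rw [hS, Finset.card_image_of_injOn]
    · rw [hTdef]
      rw [Finset.card_insert_of_notMem, Finset.card_insert_of_notMem,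
        Finset.card_insert_of_notMem, Finset.card_insert_of_notMem, Finset.card_singleton]
      all_goals simp only [Finset.mem_insert, Finset.mem_singleton, Prod.mk.injEq]
      all_goals omega
    · intro e he f hf h
      exact hdist e he f hf 0 (by simpa using h)
  have hD : DifferentiableOn ℂ (fun x => thetaJ (x * w ^ m) (w ^ 10) ^ 3 *
      thetaJ ((w ^ m) ^ 3 / x) (w ^ 10) -
      x ^ 2 * thetaJ (w ^ m / x) (w ^ 10) ^ 3 * thetaJ (x * (w ^ m) ^ 3) (w ^ 10) -
      thetaJ ((w ^ m) ^ 2) (w ^ 10) ^ 3 * thetaJ (x ^ 2) (w ^ 10)) {0}ᶜ := by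
    intro x hx
    have hx : x ≠ 0 := hx
    refine DifferentiableAt.differentiableWithinAt ?_
    have hm : ∀ a : ℂ, a ≠ 0 → DifferentiableAt ℂ (fun x => thetaJ (x * a) (w ^ 10)) x :=
      fun a ha => (hT (x * a) (mul_ne_zero hx ha)).comp x
        ((differentiableAt_id (x := x)).mul_const a)
    have hd : ∀ a : ℂ, a ≠ 0 → DifferentiableAt ℂ (fun x => thetaJ (a / x) (w ^ 10)) x :=
      fun a ha => (hT (a / x) (div_ne_zero ha hx)).comp x
        ((differentiableAt_const a).div differentiableAt_id hx)
    have hs : DifferentiableAt ℂ (fun x => thetaJ (x ^ 2) (w ^ 10)) x :=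
      DifferentiableAt.comp (f := fun x : ℂ => x ^ 2) x (hT (x ^ 2) (pow_ne_zero 2 hx)) (by fun_prop)
    exact ((((hm _ ha0).pow 3).mul (hd _ (pow_ne_zero 3 ha0))).sub
      (((differentiableAt_id.pow 2).mul ((hd _ ha0).pow 3)).mul (hm _ (pow_ne_zero 3 ha0)))).sub
      (hs.const_mul _)
  refine multiplier_zeros hQ hQ0 S ?_ ?_ hD (k := 4) (by rw [hcard]; norm_num)
    (c := (w ^ 10)⁻¹) (inv_ne_zero hQ0) ?_ ?_ hx
  · intro a ha
    obtain ⟨e, -, rfl⟩ := Finset.mem_image.1 ha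
    exact mul_ne_zero (pow_ne_zero _ (by norm_num)) (zpow_ne_zero _ hw0)
  · intro a ha b hb n hab
    obtain ⟨e, he, rfl⟩ := Finset.mem_image.1 ha
    obtain ⟨f, hf, rfl⟩ := Finset.mem_image.1 hb
    rw [hdist e he f hf n hab]
  · intro x hx
    have e1 : ∀ a : ℂ, a / (w ^ 10 * x) = a / x / w ^ 10 := fun a => by
      rw [div_div, mul_comm x]
    have e2 : (w ^ 10 * x) ^ 2 = w ^ 10 * (w ^ 10 * x ^ 2) := by ring
    rw [e1, e1, mul_assoc (w ^ 10), mul_assoc (w ^ 10), e2,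
      thetaJ_mul hQ hQ0 (mul_ne_zero hx ha0),
      thetaJ_mul hQ hQ0 (mul_ne_zero hx (pow_ne_zero 3 ha0)),
      thetaJ_mul hQ hQ0 (mul_ne_zero hQ0 (pow_ne_zero 2 hx)),
      thetaJ_mul hQ hQ0 (pow_ne_zero 2 hx),
      thetaJ_div_q hQ hQ0 (div_ne_zero ha0 hx),
      thetaJ_div_q hQ hQ0 (div_ne_zero (pow_ne_zero 3 ha0) hx)]
    have e3 : x ^ (-4 : ℤ) = (x ^ 4)⁻¹ := by rw [zpow_neg]; norm_cast
    rw [e3]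
    generalize thetaJ (x * w ^ m) (w ^ 10) = t1
    generalize thetaJ ((w ^ m) ^ 3 / x) (w ^ 10) = t2
    generalize thetaJ (w ^ m / x) (w ^ 10) = t3
    generalize thetaJ (x * (w ^ m) ^ 3) (w ^ 10) = t4
    generalize thetaJ ((w ^ m) ^ 2) (w ^ 10) = t5
    generalize thetaJ (x ^ 2) (w ^ 10) = t6
    generalize w ^ m = a at *
    generalize w ^ 10 = Q at *
    field_simp
  · intro y hy
    obtain ⟨e, he, rfl⟩ := Finset.mem_image.1 hy
    have h1 : thetaJ 1 (w ^ 10) = 0 := thetaJ_one hQ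
    simp only [hTdef, Finset.mem_insert, Finset.mem_singleton] at he
    rcases he with rfl | rfl | rfl | rfl | rfl
    · simp [h1]
    · simp only [pow_one, zpow_zero, mul_one, div_neg, div_one, neg_mul, one_mul, neg_sq, one_pow,
        h1]
      ring
    · have e1 : (w ^ m) ^ 3 / w ^ m = (w ^ m) ^ 2 := by field_simp
      simp only [pow_zero, zpow_natCast, one_mul, e1, div_self ha0, h1, ← sq]
      ring
    · have e1 : (w ^ m)⁻¹ * (w ^ m) ^ 3 = (w ^ m) ^ 2 := by field_simp
      have e2 : w ^ m / (w ^ m)⁻¹ = (w ^ m) ^ 2 := by field_simp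
      have e3 : ((w ^ m)⁻¹) ^ 2 = ((w ^ m) ^ 2)⁻¹ := by rw [inv_pow]
      simp only [pow_zero, zpow_neg, zpow_natCast, one_mul, e1, e2, e3, inv_mul_cancel₀ ha0, h1,
        thetaJ_inv hQ (pow_ne_zero 2 ha0)]
      ring
    · have hw5 : w ^ 5 ≠ 0 := pow_ne_zero 5 hw0
      have h2 : thetaJ ((w ^ 5) ^ 2) (w ^ 10) = 0 := by
        rw [← pow_mul]
        exact (thetaJ_eq_zero_iff hQ hQ0 hQ0).2 ⟨1, by simp⟩
      have h3 : ∀ a : ℂ, a ≠ 0 → thetaJ (w ^ 5 * a) (w ^ 10) =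
          -(w ^ 5 / a) * thetaJ (a / w ^ 5) (w ^ 10) := by
        intro a ha
        have e1 : w ^ 10 / (w ^ 5 * a) = w ^ 5 / a := by field_simp
        have e2 : (a / w ^ 5)⁻¹ = w ^ 5 / a := inv_div _ _
        have := thetaJ_inv hQ (div_ne_zero ha hw5)
        rw [e2] at this
        rw [← thetaJ_q_div hQ0, e1, this]
      have h5 : (w : ℂ) ^ (5 : ℤ) = w ^ 5 := by norm_cast
      simp only [pow_zero, one_mul, h5, h2, h3 _ ha0, h3 _ (pow_ne_zero 3 ha0)]
      generalize thetaJ ((w ^ m) ^ 3 / w ^ 5) (w ^ 10) = t2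
      generalize thetaJ (w ^ m / w ^ 5) (w ^ 10) = t3
      generalize w ^ m = a at *
      field_simp
      ring

lemma hasDerivAt_comp_one {f g : ℂ → ℂ} {f' g' b : ℂ} (hf : HasDerivAt f f' b)
    (hg : HasDerivAt g g' 1) (hb : g 1 = b) : HasDerivAt (fun x => f (g x)) (f' * g') 1 := by
  subst hb
  exact hf.comp 1 hg

lemma hasDerivAt_unique_one {f g : ℂ → ℂ} {f' g' : ℂ} (h : ∀ x, x ≠ 0 → f x = g x)
    (hf : HasDerivAt f f' 1) (hg : HasDerivAt g g' 1) : f' = g' := by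
  refine (hf.congr_of_eventuallyEq ?_).unique hg
  filter_upwards [isOpen_ne.mem_nhds (one_ne_zero : (1 : ℂ) ≠ 0)] with x hx
  exact (h x hx).symm

/-- The identity `thetaJ_cubic` differentiated at `x = 1`. -/
lemma thetaJ_cubic_deriv (hw : ‖w‖ < 1) (hw0 : w ≠ 0) {m : ℕ} (hm0 : 0 < m) (hm5 : m < 5)
    {a Q : ℂ} (ha : a = w ^ m) (hQw : Q = w ^ 10) :
    thetaJ a Q ^ 3 * thetaJ (a ^ 3) Q +
      a ^ 3 * deriv (fun y => thetaJ y Q) (a ^ 3) * thetaJ a Q ^ 3 -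
      3 * (a * deriv (fun y => thetaJ y Q) a) * thetaJ a Q ^ 2 * thetaJ (a ^ 3) Q =
      qPochInf Q Q ^ 2 * thetaJ (a ^ 2) Q ^ 3 := by
  have hQ : ‖Q‖ < 1 := hQw ▸ norm_pow_lt_one hw (by norm_num)
  have ha0 : a ≠ 0 := ha ▸ pow_ne_zero _ hw0
  have hid : ∀ x : ℂ, x ≠ 0 → thetaJ (x * a) Q ^ 3 * thetaJ (a ^ 3 / x) Q -
      x ^ 2 * thetaJ (a / x) Q ^ 3 * thetaJ (x * a ^ 3) Q -
      thetaJ (a ^ 2) Q ^ 3 * thetaJ (x ^ 2) Q = 0 := by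
    intro x hx
    subst ha hQw
    exact thetaJ_cubic hw hw0 hm0 hm5 hx
  have hT : ∀ b : ℂ, b ≠ 0 → HasDerivAt (fun y => thetaJ y Q) (deriv (fun y => thetaJ y Q) b) b :=
    fun b hb => (differentiableAt_thetaJ hQ hb).hasDerivAt
  have hm : ∀ b : ℂ, b ≠ 0 → HasDerivAt (fun x => thetaJ (x * b) Q)
      (deriv (fun y => thetaJ y Q) b * b) 1 := by
    intro b hb
    have h := hasDerivAt_comp_one (hT b hb) ((hasDerivAt_id (1 : ℂ)).mul_const b) (by simp)
    simpa using h
  have hd : ∀ b : ℂ, b ≠ 0 → HasDerivAt (fun x => thetaJ (b / x) Q)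
      (deriv (fun y => thetaJ y Q) b * (-b)) 1 := by
    intro b hb
    have h := hasDerivAt_comp_one (hT b hb)
      ((hasDerivAt_const (1 : ℂ) b).fun_div (hasDerivAt_id (1 : ℂ)) one_ne_zero) (by simp)
    simpa using h
  have hs : HasDerivAt (fun x => thetaJ (x ^ 2) Q) (-(qPochInf Q Q ^ 2) * 2) 1 := by
    have h := hasDerivAt_comp_one (hasDerivAt_thetaJ_one hQ) (hasDerivAt_pow 2 (1 : ℂ)) (by simp)
    simpa using h
  have H := ((((hm a ha0).fun_pow 3).fun_mul (hd _ (pow_ne_zero 3 ha0))).fun_sub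
      (((hasDerivAt_pow 2 (1 : ℂ)).fun_mul ((hd a ha0).fun_pow 3)).fun_mul
        (hm _ (pow_ne_zero 3 ha0)))).fun_sub
      (hs.const_mul (thetaJ (a ^ 2) Q ^ 3))
  have H2 := hasDerivAt_unique_one hid H (hasDerivAt_const _ _)
  simp only [one_mul, div_one, one_pow, Nat.cast_ofNat] at H2
  norm_num at H2
  linear_combination (-1 / 2) * H2

variable {q : ℂ}

/-- The Euler operator `z d/dz` applied to `j(z; q²⁵)`, at `z = q^r`. -/
noncomputable def eulerD (q : ℂ) (r : ℕ) : ℂ :=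
  q ^ r * deriv (fun y => thetaJ y (q ^ 25)) (q ^ r)

lemma hasDerivAt_thetaJ_mul_pow (hq : ‖q‖ < 1) (hq0 : q ≠ 0) (r : ℕ) :
    HasDerivAt (fun x => thetaJ (x * q ^ r) (q ^ 25)) (eulerD q r) 1 := by
  have hP := norm_pow_lt_one hq (n := 25) (by norm_num)
  have h := hasDerivAt_comp_one (differentiableAt_thetaJ hP (pow_ne_zero r hq0)).hasDerivAt
    ((hasDerivAt_id (1 : ℂ)).mul_const (q ^ r)) (by simp)
  simpa [eulerD, mul_comm] using h

lemma hasDerivAt_thetaJ_div_pow (hq : ‖q‖ < 1) (hq0 : q ≠ 0) (r : ℕ) :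
    HasDerivAt (fun x => thetaJ (q ^ r / x) (q ^ 25)) (-eulerD q r) 1 := by
  have hP := norm_pow_lt_one hq (n := 25) (by norm_num)
  have h := hasDerivAt_comp_one (differentiableAt_thetaJ hP (pow_ne_zero r hq0)).hasDerivAt
    ((hasDerivAt_const (1 : ℂ) (q ^ r)).fun_div (hasDerivAt_id (1 : ℂ)) one_ne_zero) (by simp)
  simpa [eulerD, mul_comm] using h

lemma eulerD_reflect (hq : ‖q‖ < 1) (hq0 : q ≠ 0) {r s : ℕ} (hrs : r + s = 25) :
    eulerD q s = -eulerD q r := by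
  refine hasDerivAt_unique_one (fun x hx => ?_) (hasDerivAt_thetaJ_mul_pow hq hq0 s)
    (hasDerivAt_thetaJ_div_pow hq hq0 r)
  have e : q ^ 25 / (q ^ r / x) = x * q ^ s := by
    rw [← hrs, pow_add]; field_simp
  rw [← e, thetaJ_q_div (pow_ne_zero 25 hq0)]

lemma thetaJ_q30 (hq : ‖q‖ < 1) (hq0 : q ≠ 0) :
    thetaJ (q ^ 30) (q ^ 25) = -(q ^ 5)⁻¹ * thetaJ (q ^ 5) (q ^ 25) := by
  rw [← thetaJ_mul (norm_pow_lt_one hq (by norm_num)) (pow_ne_zero _ hq0) (pow_ne_zero 5 hq0),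
    ← pow_add]

lemma eulerD_thirty (hq : ‖q‖ < 1) (hq0 : q ≠ 0) :
    eulerD q 30 = (q ^ 5)⁻¹ * (thetaJ (q ^ 5) (q ^ 25) - eulerD q 5) := by
  have hP := norm_pow_lt_one hq (n := 25) (by norm_num)
  have h := ((hasDerivAt_inv (one_ne_zero : (1 : ℂ) ≠ 0)).const_mul (-(q ^ 5)⁻¹)).fun_mul
    (hasDerivAt_thetaJ_mul_pow hq hq0 5)
  have h2 := hasDerivAt_unique_one (fun x hx => ?_) (hasDerivAt_thetaJ_mul_pow hq hq0 30) h
  · rw [h2]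
    simp only [one_pow, inv_one, one_mul, mul_one]
    ring
  · have e : x * q ^ 30 = q ^ 25 * (x * q ^ 5) := by ring
    rw [e, thetaJ_mul hP (pow_ne_zero _ hq0) (mul_ne_zero hx (pow_ne_zero 5 hq0)), mul_inv]
    ring

lemma exists_sq_eq_pow_five (hq : ‖q‖ < 1) (hq0 : q ≠ 0) :
    ∃ w : ℂ, ‖w‖ < 1 ∧ w ≠ 0 ∧ w ^ 2 = q ^ 5 := by
  obtain ⟨w, hw⟩ := IsAlgClosed.exists_pow_nat_eq (q ^ 5) (n := 2) (by norm_num)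
  have h5 := norm_pow_lt_one hq (n := 5) (by norm_num)
  rw [← hw, norm_pow] at h5
  refine ⟨w, (pow_lt_one_iff_of_nonneg (norm_nonneg _) (by norm_num)).1 h5, ?_, hw⟩
  rintro rfl
  exact pow_ne_zero 5 hq0 (by rw [← hw]; norm_num)

/-- `thetaJ_cubic_deriv` at `a = q⁵`. -/
lemma eulerD_relation_one (hq : ‖q‖ < 1) (hq0 : q ≠ 0) :
    thetaJ (q ^ 5) (q ^ 25) ^ 3 * thetaJ (q ^ 10) (q ^ 25) -
      eulerD q 10 * thetaJ (q ^ 5) (q ^ 25) ^ 3 -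
      3 * eulerD q 5 * thetaJ (q ^ 5) (q ^ 25) ^ 2 * thetaJ (q ^ 10) (q ^ 25) =
      qPochInf (q ^ 25) (q ^ 25) ^ 2 * thetaJ (q ^ 10) (q ^ 25) ^ 3 := by
  obtain ⟨w, hw, hw0, hwq⟩ := exists_sq_eq_pow_five hq hq0
  have h := thetaJ_cubic_deriv hw hw0 (m := 2) (by norm_num) (by norm_num) hwq.symm
    (show q ^ 25 = w ^ 10 by
      rw [show w ^ 10 = (w ^ 2) ^ 5 by ring, hwq]; ring)
  have h15 : eulerD q 15 = -eulerD q 10 := eulerD_reflect hq hq0 (by norm_num)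
  simp only [← pow_mul] at h
  norm_num at h
  rw [thetaJ_q15 hq0] at h
  simp only [eulerD] at h15 ⊢
  rw [h15] at h
  linear_combination h

/-- `thetaJ_cubic_deriv` at `a = q¹⁰`. -/
lemma eulerD_relation_two (hq : ‖q‖ < 1) (hq0 : q ≠ 0) :
    3 * eulerD q 10 * thetaJ (q ^ 5) (q ^ 25) * thetaJ (q ^ 10) (q ^ 25) ^ 2 -
      eulerD q 5 * thetaJ (q ^ 10) (q ^ 25) ^ 3 =
      q ^ 5 * qPochInf (q ^ 25) (q ^ 25) ^ 2 * thetaJ (q ^ 5) (q ^ 25) ^ 3 := by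
  obtain ⟨w, hw, hw0, hwq⟩ := exists_sq_eq_pow_five hq hq0
  have h := thetaJ_cubic_deriv hw hw0 (m := 4) (by norm_num) (by norm_num)
    (show q ^ 10 = w ^ 4 by
      rw [show w ^ 4 = (w ^ 2) ^ 2 by ring, hwq]; ring)
    (show q ^ 25 = w ^ 10 by
      rw [show w ^ 10 = (w ^ 2) ^ 5 by ring, hwq]; ring)
  have h30 := eulerD_thirty hq hq0
  simp only [← pow_mul] at h
  norm_num at h
  rw [thetaJ_q20 hq0, thetaJ_q30 hq hq0] at h
  simp only [eulerD] at h30 ⊢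
  rw [h30] at h
  have hq5 : q ^ 5 * (q ^ 5)⁻¹ = 1 := mul_inv_cancel₀ (pow_ne_zero 5 hq0)
  generalize (q ^ 5)⁻¹ = v at *
  generalize thetaJ (q ^ 5) (q ^ 25) = j1 at *
  generalize thetaJ (q ^ 10) (q ^ 25) = j2 at *
  generalize deriv (fun y => thetaJ y (q ^ 25)) (q ^ 10) = d2 at *
  generalize deriv (fun y => thetaJ y (q ^ 25)) (q ^ 5) = d1 at *
  linear_combination q ^ 5 * h + (q ^ 5 * d1 * j2 ^ 3 - 3 * q ^ 10 * d2 * j2 ^ 2 * j1) * hq5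

end Eisenstein

/-! ### First-order expansion of the dissection at `z = 1` and `z = q` -/

section Expansion
variable {q ζ : ℂ}

/-- The term of `dissL` that does not vanish at `z = 1`. -/
noncomputable def mainN (ζ q z : ℂ) : ℂ :=
  Ehat z q *
    (thetaJ (ζ * z) q * thetaJ (ζ ^ 2 * z) q * thetaJ (ζ ^ 3 * z) q * thetaJ (ζ ^ 4 * z) q)

/-- The sum `∑_{j=1}^{4} c_j Ehat(ζ^j z) ∏_{i ≠ j} j(ζ^i z)`, the product being over
`1 ≤ i ≤ 4`. -/
noncomputable def mainK (c : ℕ → ℂ) (ζ q z : ℂ) : ℂ :=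
  c 1 * Ehat (ζ * z) q * (thetaJ (ζ ^ 2 * z) q * thetaJ (ζ ^ 3 * z) q * thetaJ (ζ ^ 4 * z) q) +
  c 2 * Ehat (ζ ^ 2 * z) q * (thetaJ (ζ * z) q * thetaJ (ζ ^ 3 * z) q * thetaJ (ζ ^ 4 * z) q) +
  c 3 * Ehat (ζ ^ 3 * z) q * (thetaJ (ζ * z) q * thetaJ (ζ ^ 2 * z) q * thetaJ (ζ ^ 4 * z) q) +
  c 4 * Ehat (ζ ^ 4 * z) q * (thetaJ (ζ * z) q * thetaJ (ζ ^ 2 * z) q * thetaJ (ζ ^ 3 * z) q)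

lemma dissL_eq_main (ζ q z : ℂ) :
    dissL ζ q z = z / 5 * (mainN ζ q z + thetaJ z q * mainK (fun j => ζ ^ j) ζ q z) := by
  simp only [dissL, mainN, mainK]
  ring

lemma dissL_q_mul (hq : ‖q‖ < 1) (hq0 : q ≠ 0) (hζ : 1 + ζ + ζ ^ 2 + ζ ^ 3 + ζ ^ 4 = 0) {z : ℂ}
    (hz : z ≠ 0) : dissL ζ q (q * z) =
      q ^ 2 * z⁻¹ / 5 * (mainN ζ q z + thetaJ z q * mainK (fun j => ζ ^ (5 - j)) ζ q z) := by
  have h5 := root_pow_five hζ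
  have hζ0 : ζ ≠ 0 := by rintro rfl; simp at h5
  have hp : ∀ n, ζ ^ n ≠ 0 := fun n => pow_ne_zero n hζ0
  have c1 : ζ * (q * z) = q * (ζ * z) := by ring
  have c2 : ζ ^ 2 * (q * z) = q * (ζ ^ 2 * z) := by ring
  have c3 : ζ ^ 3 * (q * z) = q * (ζ ^ 3 * z) := by ring
  have c4 : ζ ^ 4 * (q * z) = q * (ζ ^ 4 * z) := by ring
  simp only [dissL, mainN, mainK, c1, c2, c3, c4]
  rw [thetaJ_mul hq hq0 hz, thetaJ_mul hq hq0 (mul_ne_zero hζ0 hz),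
    thetaJ_mul hq hq0 (mul_ne_zero (hp 2) hz), thetaJ_mul hq hq0 (mul_ne_zero (hp 3) hz),
    thetaJ_mul hq hq0 (mul_ne_zero (hp 4) hz),
    Ehat_mul hq hq0 hz, Ehat_mul hq hq0 (mul_ne_zero hζ0 hz),
    Ehat_mul hq hq0 (mul_ne_zero (hp 2) hz), Ehat_mul hq hq0 (mul_ne_zero (hp 3) hz),
    Ehat_mul hq hq0 (mul_ne_zero (hp 4) hz)]
  have i1 : (ζ * z)⁻¹ = ζ ^ 4 * z⁻¹ := by field_simp; rw [h5]
  have i2 : (ζ ^ 2 * z)⁻¹ = ζ ^ 3 * z⁻¹ := by field_simp; rw [h5]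
  have i3 : (ζ ^ 3 * z)⁻¹ = ζ ^ 2 * z⁻¹ := by field_simp; rw [h5]
  have i4 : (ζ ^ 4 * z)⁻¹ = ζ * z⁻¹ := by field_simp; rw [h5]
  rw [i1, i2, i3, i4]
  generalize thetaJ z q = t0
  generalize thetaJ (ζ * z) q = t1
  generalize thetaJ (ζ ^ 2 * z) q = t2
  generalize thetaJ (ζ ^ 3 * z) q = t3
  generalize thetaJ (ζ ^ 4 * z) q = t4
  generalize Ehat z q = e0
  generalize Ehat (ζ * z) q = e1
  generalize Ehat (ζ ^ 2 * z) q = e2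
  generalize Ehat (ζ ^ 3 * z) q = e3
  generalize Ehat (ζ ^ 4 * z) q = e4
  have pw : ∀ n : ℕ, ζ ^ n = ζ ^ (n % 5) := fun n => pow_eq_pow_mod n h5
  field_simp
  ring_nf
  simp only [pw 9, pw 10, pw 11, pw 12, pw 13, pw 14, pw 16, pw 17, pw 19, pw 21, pw 22]
  norm_num
  linear_combination ((q * z ^ 2 - 1) * (t0 * t1 * t2 * t3 * t4)) * hζ

lemma differentiableAt_thetaJ_smul (hq : ‖q‖ < 1) {a : ℂ} (ha : a ≠ 0) :
    DifferentiableAt ℂ (fun z => thetaJ (a * z) q) 1 :=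
  (hasDerivAt_comp_one (differentiableAt_thetaJ hq ha).hasDerivAt
    ((hasDerivAt_id (1 : ℂ)).const_mul a) (by simp)).differentiableAt

lemma differentiableAt_Ehat (hq : ‖q‖ < 1) {a : ℂ} (ha : a ≠ 0) :
    DifferentiableAt ℂ (fun z => Ehat z q) a :=
  (differentiableOn_Ehat hq).differentiableAt (isOpen_ne.mem_nhds ha)

lemma differentiableAt_Ehat_smul (hq : ‖q‖ < 1) {a : ℂ} (ha : a ≠ 0) :
    DifferentiableAt ℂ (fun z => Ehat (a * z) q) 1 :=
  (hasDerivAt_comp_one (differentiableAt_Ehat hq ha).hasDerivAt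
    ((hasDerivAt_id (1 : ℂ)).const_mul a) (by simp)).differentiableAt

lemma differentiableAt_mainN (hq : ‖q‖ < 1) (hζ0 : ζ ≠ 0) :
    DifferentiableAt ℂ (fun z => mainN ζ q z) 1 := by
  have T := fun n : ℕ => differentiableAt_thetaJ_smul hq (pow_ne_zero n hζ0)
  have T1 := differentiableAt_thetaJ_smul hq hζ0
  exact (differentiableAt_Ehat hq one_ne_zero).mul (((T1.mul (T 2)).mul (T 3)).mul (T 4))

lemma differentiableAt_mainK (hq : ‖q‖ < 1) (hζ0 : ζ ≠ 0) (c : ℕ → ℂ) :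
    DifferentiableAt ℂ (fun z => mainK c ζ q z) 1 := by
  have T := fun n : ℕ => differentiableAt_thetaJ_smul hq (pow_ne_zero n hζ0)
  have T1 := differentiableAt_thetaJ_smul hq hζ0
  have E := fun n : ℕ => differentiableAt_Ehat_smul hq (pow_ne_zero n hζ0)
  have E1 := differentiableAt_Ehat_smul hq hζ0
  exact ((((E1.const_mul _).mul (((T 2).mul (T 3)).mul (T 4))).add
    (((E 2).const_mul _).mul ((T1.mul (T 3)).mul (T 4)))).add
    (((E 3).const_mul _).mul ((T1.mul (T 2)).mul (T 4)))).add
    (((E 4).const_mul _).mul ((T1.mul (T 2)).mul (T 3)))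

lemma mainN_inv (hq : ‖q‖ < 1) (hζ : 1 + ζ + ζ ^ 2 + ζ ^ 3 + ζ ^ 4 = 0) {z : ℂ}
    (hz : z ≠ 0) : mainN ζ q z⁻¹ = (z ^ 4)⁻¹ * mainN ζ q z := by
  have h5 := root_pow_five hζ
  have hζ0 : ζ ≠ 0 := by rintro rfl; simp at h5
  have i1 : (ζ * z)⁻¹ = ζ ^ 4 * z⁻¹ := by field_simp; rw [h5]
  have i2 : (ζ ^ 2 * z)⁻¹ = ζ ^ 3 * z⁻¹ := by field_simp; rw [h5]
  have i3 : (ζ ^ 3 * z)⁻¹ = ζ ^ 2 * z⁻¹ := by field_simp; rw [h5]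
  have i4 : (ζ ^ 4 * z)⁻¹ = ζ * z⁻¹ := by field_simp; rw [h5]
  simp only [mainN]
  rw [Ehat_inv, ← i1, ← i2, ← i3, ← i4, thetaJ_inv hq (mul_ne_zero hζ0 hz),
    thetaJ_inv hq (mul_ne_zero (pow_ne_zero _ hζ0) hz),
    thetaJ_inv hq (mul_ne_zero (pow_ne_zero _ hζ0) hz),
    thetaJ_inv hq (mul_ne_zero (pow_ne_zero _ hζ0) hz), i1, i2, i3, i4, ← inv_pow]
  generalize thetaJ (ζ * z) q = t1
  generalize thetaJ (ζ ^ 2 * z) q = t2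
  generalize thetaJ (ζ ^ 3 * z) q = t3
  generalize thetaJ (ζ ^ 4 * z) q = t4
  linear_combination (Ehat z q * z⁻¹ ^ 4 * t1 * t2 * t3 * t4 * (ζ ^ 5 + 1)) * h5

/-- The symmetry `N(1/z) = z⁻⁴ N(z)` determines the logarithmic derivative of `N` at `1`. -/
lemma hasDerivAt_mainN (hq : ‖q‖ < 1) (hζ : 1 + ζ + ζ ^ 2 + ζ ^ 3 + ζ ^ 4 = 0) :
    HasDerivAt (fun z => mainN ζ q z) (2 * mainN ζ q 1) 1 := by
  have h5 := root_pow_five hζ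
  have hζ0 : ζ ≠ 0 := by rintro rfl; simp at h5
  have h := (differentiableAt_mainN hq hζ0).hasDerivAt
  have hl := hasDerivAt_comp_one h (hasDerivAt_inv (one_ne_zero : (1 : ℂ) ≠ 0)) inv_one
  have hr := ((hasDerivAt_pow 4 (1 : ℂ)).fun_inv (by norm_num)).fun_mul h
  have e := hasDerivAt_unique_one (fun z hz => mainN_inv hq hζ hz) hl hr
  norm_num at e
  have e' : deriv (fun z => mainN ζ q z) 1 = 2 * mainN ζ q 1 := by linear_combination (-1 / 2) * e
  rwa [e'] at h

lemma hasDerivAt_dissL_one (hq : ‖q‖ < 1) (hζ : 1 + ζ + ζ ^ 2 + ζ ^ 3 + ζ ^ 4 = 0) :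
    HasDerivAt (fun z => dissL ζ q z)
      ((3 * mainN ζ q 1 - qPochInf q q ^ 2 * mainK (fun j => ζ ^ j) ζ q 1) / 5) 1 := by
  have h5 := root_pow_five hζ
  have hζ0 : ζ ≠ 0 := by rintro rfl; simp at h5
  have h := ((hasDerivAt_id (1 : ℂ)).div_const 5).fun_mul ((hasDerivAt_mainN hq hζ).fun_add
    ((hasDerivAt_thetaJ_one hq).fun_mul
      (differentiableAt_mainK hq hζ0 (fun j => ζ ^ j)).hasDerivAt))
  simp only [thetaJ_one hq, id] at h
  simp only [dissL_eq_main]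
  exact h.congr_deriv (by ring)

lemma hasDerivAt_dissL_q (hq : ‖q‖ < 1) (hq0 : q ≠ 0)
    (hζ : 1 + ζ + ζ ^ 2 + ζ ^ 3 + ζ ^ 4 = 0) :
    HasDerivAt (fun z => dissL ζ q (q * z))
      (q ^ 2 * (mainN ζ q 1 - qPochInf q q ^ 2 * mainK (fun j => ζ ^ (5 - j)) ζ q 1) / 5) 1 := by
  have h5 := root_pow_five hζ
  have hζ0 : ζ ≠ 0 := by rintro rfl; simp at h5
  have h := (((hasDerivAt_inv (one_ne_zero : (1 : ℂ) ≠ 0)).const_mul (q ^ 2)).div_const 5).fun_mul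
    ((hasDerivAt_mainN hq hζ).fun_add ((hasDerivAt_thetaJ_one hq).fun_mul
      (differentiableAt_mainK hq hζ0 (fun j => ζ ^ (5 - j))).hasDerivAt))
  simp only [thetaJ_one hq] at h
  have h2 := h.congr_of_eventuallyEq (f₁ := fun z => dissL ζ q (q * z)) (by
    filter_upwards [isOpen_ne.mem_nhds (one_ne_zero : (1 : ℂ) ≠ 0)] with z hz
    exact dissL_q_mul hq hq0 hζ hz)
  exact h2.congr_deriv (by simp only [one_pow, inv_one]; ring)

lemma differentiableAt_Ehat_mul_pow (hq : ‖q‖ < 1) (hq0 : q ≠ 0) (r : ℕ) :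
    DifferentiableAt ℂ (fun x => Ehat (x * q ^ r) (q ^ 25)) 1 :=
  (hasDerivAt_comp_one (differentiableAt_Ehat (norm_pow_lt_one hq (by norm_num))
    (pow_ne_zero r hq0)).hasDerivAt ((hasDerivAt_id (1 : ℂ)).mul_const (q ^ r))
    (by simp)).differentiableAt

lemma hasDerivAt_dissR_one (hq : ‖q‖ < 1) (hq0 : q ≠ 0) :
    HasDerivAt (fun z => dissR q (z ^ 5))
      (5 * (-(Ehat (q ^ 5) (q ^ 25) - thetaJ (q ^ 5) (q ^ 25)) * qPochInf (q ^ 25) (q ^ 25) ^ 2 *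
          thetaJ (q ^ 5) (q ^ 25) * thetaJ (q ^ 10) (q ^ 25) ^ 2 +
        dissK q * (thetaJ (q ^ 5) (q ^ 25) * thetaJ (q ^ 10) (q ^ 25) -
          eulerD q 10 * thetaJ (q ^ 5) (q ^ 25) - eulerD q 5 * thetaJ (q ^ 10) (q ^ 25)) -
        dissK q * q ^ 2 * qPochInf (q ^ 25) (q ^ 25) ^ 2 * thetaJ (q ^ 10) (q ^ 25))) 1 := by
  have hP := norm_pow_lt_one hq (n := 25) (by norm_num)
  have hE := (differentiableAt_Ehat_mul_pow hq hq0 5).hasDerivAt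
  have hT := hasDerivAt_thetaJ_mul_pow hq hq0
  have h0 := hasDerivAt_thetaJ_one hP
  have h := ((hE.fun_sub (hT 5)).fun_mul (((h0.fun_mul (hT 10)).fun_mul (hT 15)).fun_mul (hT 20))
    |>.fun_add (((hasDerivAt_id (1 : ℂ)).const_mul (dissK q)).fun_mul ((hT 15).fun_mul (hT 20)))
    |>.fun_add ((h0.fun_mul (hT 10)).const_mul (dissK q * q ^ 2)))
  have h2 := hasDerivAt_comp_one h (hasDerivAt_pow 5 (1 : ℂ)) (one_pow 5)
  simp only [one_mul, thetaJ_one hP, eulerD_reflect hq hq0 (show 10 + 15 = 25 by norm_num),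
    eulerD_reflect hq hq0 (show 5 + 20 = 25 by norm_num), thetaJ_q15 hq0, thetaJ_q20 hq0,
    one_pow, id] at h2
  exact h2.congr_deriv (by push_cast; ring)

lemma hasDerivAt_dissR_q (hq : ‖q‖ < 1) (hq0 : q ≠ 0) :
    HasDerivAt (fun z => dissR q ((q * z) ^ 5))
      (5 * ((Ehat (q ^ 10) (q ^ 25) - thetaJ (q ^ 10) (q ^ 25)) * qPochInf (q ^ 25) (q ^ 25) ^ 2 *
          thetaJ (q ^ 5) (q ^ 25) ^ 2 * thetaJ (q ^ 10) (q ^ 25) +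
        dissK q * q ^ 5 * qPochInf (q ^ 25) (q ^ 25) ^ 2 * thetaJ (q ^ 5) (q ^ 25) +
        dissK q * q ^ 2 * (eulerD q 5 * thetaJ (q ^ 10) (q ^ 25) -
          eulerD q 10 * thetaJ (q ^ 5) (q ^ 25)))) 1 := by
  have hP := norm_pow_lt_one hq (n := 25) (by norm_num)
  have hP0 : q ^ 25 ≠ 0 := pow_ne_zero _ hq0
  have hE := (differentiableAt_Ehat_mul_pow hq hq0 10).hasDerivAt
  have hT := hasDerivAt_thetaJ_mul_pow hq hq0
  have h25 : HasDerivAt (fun x => thetaJ (x * q ^ 25) (q ^ 25)) (qPochInf (q ^ 25) (q ^ 25) ^ 2) 1 := by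
    have h := ((hasDerivAt_inv (one_ne_zero : (1 : ℂ) ≠ 0)).fun_neg).fun_mul
      (hasDerivAt_thetaJ_one hP)
    have h2 := h.congr_of_eventuallyEq (f₁ := fun x => thetaJ (x * q ^ 25) (q ^ 25)) (by
      filter_upwards [isOpen_ne.mem_nhds (one_ne_zero : (1 : ℂ) ≠ 0)] with x hx
      rw [mul_comm, thetaJ_mul hP hP0 hx])
    exact h2.congr_deriv (by simp only [thetaJ_one hP, one_pow, inv_one]; ring)
  have hP1 : thetaJ (q ^ 25) (q ^ 25) = 0 := (thetaJ_eq_zero_iff hP hP0 hP0).2 ⟨1, by simp⟩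
  have h := ((hE.fun_sub (hT 10)).fun_mul
      ((((hT 5).fun_mul (hT 15)).fun_mul (hT 20)).fun_mul h25)
    |>.fun_add (((hasDerivAt_id (1 : ℂ)).const_mul (dissK q * q ^ 5)).fun_mul
      ((hT 20).fun_mul h25))
    |>.fun_add (((hT 5).fun_mul (hT 15)).const_mul (dissK q * q ^ 2)))
  have h2 := hasDerivAt_comp_one h (hasDerivAt_pow 5 (1 : ℂ)) (one_pow 5)
  simp only [one_mul, hP1, eulerD_reflect hq hq0 (show 10 + 15 = 25 by norm_num),
    eulerD_reflect hq hq0 (show 5 + 20 = 25 by norm_num), thetaJ_q15 hq0, thetaJ_q20 hq0,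
    one_pow, id] at h2
  have e : (fun z => dissR q ((q * z) ^ 5)) = fun z =>
      (Ehat (z ^ 5 * q ^ 10) (q ^ 25) - thetaJ (z ^ 5 * q ^ 10) (q ^ 25)) *
        (thetaJ (z ^ 5 * q ^ 5) (q ^ 25) * thetaJ (z ^ 5 * q ^ 15) (q ^ 25) *
          thetaJ (z ^ 5 * q ^ 20) (q ^ 25) * thetaJ (z ^ 5 * q ^ 25) (q ^ 25)) +
      dissK q * q ^ 5 * z ^ 5 *
        (thetaJ (z ^ 5 * q ^ 20) (q ^ 25) * thetaJ (z ^ 5 * q ^ 25) (q ^ 25)) +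
      dissK q * q ^ 2 * (thetaJ (z ^ 5 * q ^ 5) (q ^ 25) * thetaJ (z ^ 5 * q ^ 15) (q ^ 25)) := by
    funext z
    have a0 : (q * z) ^ 5 = z ^ 5 * q ^ 5 := by ring
    have a1 : ∀ n, z ^ 5 * q ^ 5 * q ^ n = z ^ 5 * q ^ (5 + n) := fun n => by ring
    simp only [dissR, a0, a1]
    simp only [Nat.reduceAdd]
    ring
  rw [e]
  exact h2.congr_deriv (by push_cast; ring)

end Expansion

/-! ### The rank generating function at fifth roots of unity -/

section Assembly
variable {q ζ : ℂ}

/-- `R(a;q)` for `|a| = 1`, by `rankGF_eq_Ehat`. -/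
noncomputable def rankR (a q : ℂ) : ℂ := Ehat a q / thetaJ0 a q

lemma one_sub_mul_Ehat (hq : ‖q‖ < 1) {a : ℂ} (ha : thetaJ a q ≠ 0) :
    (1 - a) * Ehat a q = rankR a q * thetaJ a q := by
  rw [thetaJ_eq hq] at ha
  have h0 := right_ne_zero_of_mul ha
  rw [rankR, thetaJ_eq hq]
  field_simp

lemma mainN_one (hq : ‖q‖ < 1) : mainN ζ q 1 = qPochInf q q *
    (thetaJ ζ q * thetaJ (ζ ^ 2) q * thetaJ (ζ ^ 3) q * thetaJ (ζ ^ 4) q) := by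
  simp only [mainN, mul_one, Ehat_one hq]

lemma thetaJ_roots_ne_zero (hq : ‖q‖ < 1) (hq0 : q ≠ 0)
    (hζ : 1 + ζ + ζ ^ 2 + ζ ^ 3 + ζ ^ 4 = 0) :
    thetaJ ζ q * thetaJ (ζ ^ 2) q * thetaJ (ζ ^ 3) q * thetaJ (ζ ^ 4) q ≠ 0 := by
  intro h
  have h1 := thetaJ_root_prod hq hq0 hζ
  rw [h, mul_zero, eq_comm] at h1
  have hP := norm_pow_lt_one hq (n := 25) (by norm_num)
  refine mul_ne_zero (by norm_num) (pow_ne_zero 2 (mul_ne_zero (mul_ne_zero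
    (qPochInf_self_ne_zero hP) (thetaJ_pow_ne_zero hq hq0 ?_ ?_))
    (thetaJ_pow_ne_zero hq hq0 ?_ ?_))) h1 <;> norm_num

/-- The two sums over fifth roots of unity at `z = 1`, in terms of `R(ζ;q)` and `R(ζ²;q)`. -/
lemma mainK_one (hq : ‖q‖ < 1) (hq0 : q ≠ 0) (hζ : 1 + ζ + ζ ^ 2 + ζ ^ 3 + ζ ^ 4 = 0) :
    mainK (fun j => ζ ^ j) ζ q 1 = -(rankR ζ q + rankR (ζ ^ 2) q) *
      (thetaJ ζ q * thetaJ (ζ ^ 2) q * thetaJ (ζ ^ 3) q * thetaJ (ζ ^ 4) q) ∧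
    mainK (fun j => ζ ^ (5 - j)) ζ q 1 =
      ((1 + (ζ + ζ ^ 4)) * rankR ζ q - (ζ + ζ ^ 4) * rankR (ζ ^ 2) q) *
      (thetaJ ζ q * thetaJ (ζ ^ 2) q * thetaJ (ζ ^ 3) q * thetaJ (ζ ^ 4) q) := by
  have h5 := root_pow_five hζ
  have hζ0 : ζ ≠ 0 := by rintro rfl; simp at h5
  have hT := thetaJ_roots_ne_zero hq hq0 hζ
  have i1 : ζ⁻¹ = ζ ^ 4 := by field_simp; rw [h5]
  have i2 : (ζ ^ 2)⁻¹ = ζ ^ 3 := by field_simp; rw [h5]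
  have e4 : Ehat (ζ ^ 4) q = Ehat ζ q := by rw [← i1, Ehat_inv]
  have e3 : Ehat (ζ ^ 3) q = Ehat (ζ ^ 2) q := by rw [← i2, Ehat_inv]
  have t4 : thetaJ (ζ ^ 4) q = -ζ ^ 4 * thetaJ ζ q := by rw [← i1, thetaJ_inv hq hζ0]
  have t3 : thetaJ (ζ ^ 3) q = -ζ ^ 3 * thetaJ (ζ ^ 2) q := by
    rw [← i2, thetaJ_inv hq (pow_ne_zero 2 hζ0)]
  have r1 := one_sub_mul_Ehat hq (a := ζ) (by intro h; simp [h] at hT)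
  have r2 := one_sub_mul_Ehat hq (a := ζ ^ 2) (by intro h; simp [h] at hT)
  simp only [mainK, mul_one, e3, e4, t3, t4]
  generalize thetaJ ζ q = t1 at *
  generalize thetaJ (ζ ^ 2) q = t2 at *
  generalize rankR ζ q = R1 at *
  generalize rankR (ζ ^ 2) q = R2 at *
  generalize Ehat ζ q = E1 at *
  generalize Ehat (ζ ^ 2) q = E2 at *
  constructor
  · linear_combination (-ζ ^ 7 * t1 * t2 ^ 2) * r1 + (-ζ ^ 7 * t1 ^ 2 * t2) * r2
  · norm_num
    linear_combination E1 * t1 * t2 ^ 2 * (ζ ^ 4 + ζ ^ 7) * h5 +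
      (1 + ζ + ζ ^ 4) * ζ ^ 7 * t1 * t2 ^ 2 * r1 + E2 * t1 ^ 2 * t2 * (ζ ^ 6 - ζ ^ 8) * h5 -
      (ζ + ζ ^ 4) * ζ ^ 7 * t1 ^ 2 * t2 * r2

/-- Equality of the derivatives of the two sides of the dissection identity at `z = 1`. -/
lemma rank_relation_one (hq : ‖q‖ < 1) (hq0 : q ≠ 0) (hζ : 1 + ζ + ζ ^ 2 + ζ ^ 3 + ζ ^ 4 = 0) :
    (3 + qPochInf q q * (rankR ζ q + rankR (ζ ^ 2) q)) *
        (thetaJ (q ^ 5) (q ^ 25) * thetaJ (q ^ 10) (q ^ 25)) =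
      5 * (-(Ehat (q ^ 5) (q ^ 25) - thetaJ (q ^ 5) (q ^ 25)) * qPochInf q q *
          thetaJ (q ^ 10) (q ^ 25) +
        thetaJ (q ^ 5) (q ^ 25) * thetaJ (q ^ 10) (q ^ 25) -
        eulerD q 10 * thetaJ (q ^ 5) (q ^ 25) - eulerD q 5 * thetaJ (q ^ 10) (q ^ 25) -
        q ^ 2 * qPochInf (q ^ 25) (q ^ 25) ^ 2 * thetaJ (q ^ 10) (q ^ 25)) := by
  have h := hasDerivAt_unique_one (fun z hz => dissL_eq_dissR hq hq0 hζ hz)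
    (hasDerivAt_dissL_one hq hζ) (hasDerivAt_dissR_one hq hq0)
  rw [mainN_one hq, (mainK_one hq hq0 hζ).1] at h
  have hr := thetaJ_root_prod hq hq0 hζ
  have hc := qPochInf_self_ne_zero hq
  have hcP := qPochInf_self_ne_zero (norm_pow_lt_one hq (n := 25) (by norm_num))
  have h1 := thetaJ_pow_ne_zero hq hq0 (r := 5) (by norm_num) (by norm_num)
  have h2 := thetaJ_pow_ne_zero hq hq0 (r := 10) (by norm_num) (by norm_num)
  rw [dissK] at h
  generalize thetaJ ζ q * thetaJ (ζ ^ 2) q * thetaJ (ζ ^ 3) q * thetaJ (ζ ^ 4) q = T at *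
  generalize thetaJ (q ^ 5) (q ^ 25) = j1 at *
  generalize thetaJ (q ^ 10) (q ^ 25) = j2 at *
  generalize qPochInf (q ^ 25) (q ^ 25) = P at *
  generalize qPochInf q q = c at *
  have hk : P ^ 2 * j1 * j2 ≠ 0 := by positivity
  field_simp at h
  refine mul_left_cancel₀ hk ?_
  linear_combination h / 5 - (3 + c * (rankR ζ q + rankR (ζ ^ 2) q)) / 5 * hr

/-- Equality of the derivatives of the two sides of the dissection identity at `z = q`. -/
lemma rank_relation_two (hq : ‖q‖ < 1) (hq0 : q ≠ 0) (hζ : 1 + ζ + ζ ^ 2 + ζ ^ 3 + ζ ^ 4 = 0) :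
    q ^ 2 * (1 - qPochInf q q *
        ((1 + (ζ + ζ ^ 4)) * rankR ζ q - (ζ + ζ ^ 4) * rankR (ζ ^ 2) q)) *
        (thetaJ (q ^ 5) (q ^ 25) * thetaJ (q ^ 10) (q ^ 25)) =
      5 * ((Ehat (q ^ 10) (q ^ 25) - thetaJ (q ^ 10) (q ^ 25)) * qPochInf q q *
          thetaJ (q ^ 5) (q ^ 25) +
        q ^ 5 * qPochInf (q ^ 25) (q ^ 25) ^ 2 * thetaJ (q ^ 5) (q ^ 25) +
        q ^ 2 * (eulerD q 5 * thetaJ (q ^ 10) (q ^ 25) -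
          eulerD q 10 * thetaJ (q ^ 5) (q ^ 25))) := by
  have h := hasDerivAt_unique_one
    (fun z hz => dissL_eq_dissR hq hq0 hζ (z := q * z) (mul_ne_zero hq0 hz))
    (hasDerivAt_dissL_q hq hq0 hζ) (hasDerivAt_dissR_q hq hq0)
  rw [mainN_one hq, (mainK_one hq hq0 hζ).2] at h
  have hr := thetaJ_root_prod hq hq0 hζ
  have hc := qPochInf_self_ne_zero hq
  have hcP := qPochInf_self_ne_zero (norm_pow_lt_one hq (n := 25) (by norm_num))
  have h1 := thetaJ_pow_ne_zero hq hq0 (r := 5) (by norm_num) (by norm_num)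
  have h2 := thetaJ_pow_ne_zero hq hq0 (r := 10) (by norm_num) (by norm_num)
  rw [dissK] at h
  generalize thetaJ ζ q * thetaJ (ζ ^ 2) q * thetaJ (ζ ^ 3) q * thetaJ (ζ ^ 4) q = T at *
  generalize thetaJ (q ^ 5) (q ^ 25) = j1 at *
  generalize thetaJ (q ^ 10) (q ^ 25) = j2 at *
  generalize qPochInf (q ^ 25) (q ^ 25) = P at *
  generalize qPochInf q q = c at *
  generalize (1 + (ζ + ζ ^ 4)) * rankR ζ q - (ζ + ζ ^ 4) * rankR (ζ ^ 2) q = B at *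
  have hk : P ^ 2 * j1 * j2 ≠ 0 := by positivity
  field_simp at h
  refine mul_left_cancel₀ hk ?_
  linear_combination h / 5 - q ^ 2 * (1 - c * B) / 5 * hr

/-- Elimination of `R(ζ²;q)` and of the theta derivatives `ρ1`, `ρ2` from the two derivative
relations `Y1`, `Y2` and the relations `R1`, `R2`; the factorization of
`t² + (s - 2) q² - (2 s + 1) q³ / t + s q⁵ / t³` lets `hE` apply. -/
lemma rank_algebra {s E w b t v q φ ψ r1 r2 ρ1 ρ2 : ℂ} (hs : s ^ 2 + s = 1) (hv : t * v = 1)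
    (Y1 : 3 + E * (r1 + r2) = 5 * (-φ * E + 1 - ρ2 - ρ1 - q ^ 2 * w))
    (Y2 : 1 - E * ((1 + s) * r1 - s * r2) = 5 * (ψ * E + q ^ 3 * w * v + ρ1 - ρ2))
    (R1 : 1 - ρ2 - 3 * ρ1 = w * t ^ 2) (R2 : 3 * ρ2 - ρ1 = q ^ 5 * w * v ^ 3)
    (hE : E * b = w * (t - q - q ^ 2 * v)) :
    E * r1 = E * ((s - 2) * φ - (1 + 2 * s) * ψ +
      b * (t + q + s * q ^ 2 * v - s * q ^ 3 * v ^ 2)) := by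
  have h1 : ρ1 = (3 - 3 * (w * t ^ 2) - q ^ 5 * w * v ^ 3) / 10 := by
    linear_combination (-3 / 10) * R1 - 1 / 10 * R2
  have h2 : ρ2 = (1 - w * t ^ 2 + 3 * (q ^ 5 * w * v ^ 3)) / 10 := by
    linear_combination (-1 / 10) * R1 + 3 / 10 * R2
  subst h1 h2
  linear_combination (-(1 + 2 * s) / 5) * Y2 - (s - 2) / 5 * Y1 - 2 * E * (r1 - r2) / 5 * hs -
    (t + q + s * q ^ 2 * v - s * q ^ 3 * v ^ 2) * hE -
    w * (s * q ^ 2 - q ^ 2 - s * q ^ 3 * v) * hv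

/-- The mod-5 rank identity in terms of `Ehat` and of theta functions of nome `q²⁵`. -/
lemma rankR_eq (hq : ‖q‖ < 1) (hq0 : q ≠ 0) (hζ : 1 + ζ + ζ ^ 2 + ζ ^ 3 + ζ ^ 4 = 0) :
    rankR ζ q =
      (ζ + ζ ^ 4 - 2) * (Ehat (q ^ 5) (q ^ 25) / thetaJ (q ^ 5) (q ^ 25) - 1) -
      (1 + 2 * (ζ + ζ ^ 4)) * ((Ehat (q ^ 10) (q ^ 25) / thetaJ (q ^ 10) (q ^ 25) - 1) / q ^ 2) +
      qPochInf (q ^ 25) (q ^ 25) / thetaJ (q ^ 5) (q ^ 25) *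
        (thetaJ (q ^ 10) (q ^ 25) / thetaJ (q ^ 5) (q ^ 25) + q +
          (ζ + ζ ^ 4) * q ^ 2 * (thetaJ (q ^ 5) (q ^ 25) / thetaJ (q ^ 10) (q ^ 25)) -
          (ζ + ζ ^ 4) * q ^ 3 * (thetaJ (q ^ 5) (q ^ 25) / thetaJ (q ^ 10) (q ^ 25)) ^ 2) := by
  have y1 := rank_relation_one hq hq0 hζ
  have y2 := rank_relation_two hq hq0 hζ
  have d1 := eulerD_relation_one hq hq0
  have d2 := eulerD_relation_two hq hq0
  have he := euler_dissection hq hq0 hζ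
  have hc := qPochInf_self_ne_zero hq
  have h1 := thetaJ_pow_ne_zero hq hq0 (r := 5) (by norm_num) (by norm_num)
  have h2 := thetaJ_pow_ne_zero hq hq0 (r := 10) (by norm_num) (by norm_num)
  have hs : (ζ + ζ ^ 4) ^ 2 + (ζ + ζ ^ 4) = 1 := by
    linear_combination (ζ ^ 4 - ζ ^ 3 + 2 * ζ - 1) * hζ
  generalize thetaJ (q ^ 5) (q ^ 25) = j1 at *
  generalize thetaJ (q ^ 10) (q ^ 25) = j2 at *
  generalize qPochInf (q ^ 25) (q ^ 25) = P at *
  generalize qPochInf q q = c at *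
  refine mul_left_cancel₀ hc (rank_algebra (w := P ^ 2 / j1) (r2 := rankR (ζ ^ 2) q)
    (ρ1 := eulerD q 5 / j1) (ρ2 := eulerD q 10 / j2) hs ?_ ?_ ?_ ?_ ?_ ?_)
  · field_simp
  · field_simp
    linear_combination y1
  · field_simp
    linear_combination y2
  · field_simp
    linear_combination d1
  · field_simp
    linear_combination d2
  · field_simp
    linear_combination P * he

/-- The series in `phiRam` (`r = 1`) and `psiRam` (`r = 2`). -/
lemma tsum_rank_eq {p : ℂ} (hp : ‖p‖ < 1) (hp0 : p ≠ 0) {r s : ℕ} (hr : r ≠ 0) (hs : s ≠ 0)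
    (hrs : r + s = 5) :
    ∑' n : ℕ, p ^ (5 * n ^ 2) / (qPochN (p ^ r) (p ^ 5) (n + 1) * qPochN (p ^ s) (p ^ 5) n) =
      Ehat (p ^ r) (p ^ 5) / thetaJ (p ^ r) (p ^ 5) := by
  have h5 := norm_pow_lt_one hp (n := 5) (by norm_num)
  have e : p ^ 5 / p ^ r = p ^ s := by
    rw [← hrs, pow_add, mul_div_cancel_left₀ _ (pow_ne_zero r hp0)]
  have h := Ehat_div_thetaJ h5 (norm_mul_pow_ne_one h5 (norm_pow_lt_one hp hr))
    (by rw [e]; exact norm_mul_pow_ne_one h5 (norm_pow_lt_one hp hs))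
  simpa only [e, ← pow_mul] using h

lemma phiRam_eq {p : ℂ} (hp : ‖p‖ < 1) (hp0 : p ≠ 0) :
    phiRam p = Ehat p (p ^ 5) / thetaJ p (p ^ 5) - 1 := by
  have h := tsum_rank_eq hp hp0 one_ne_zero four_ne_zero (by norm_num)
  simp only [pow_one] at h
  rw [phiRam, h]
  ring

lemma psiRam_eq {p : ℂ} (hp : ‖p‖ < 1) (hp0 : p ≠ 0) :
    psiRam p = Ehat (p ^ 2) (p ^ 5) / thetaJ (p ^ 2) (p ^ 5) - 1 := by
  rw [psiRam, tsum_rank_eq hp hp0 two_ne_zero three_ne_zero (by norm_num)]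
  ring

lemma thetaJ_eq_qPochInf {p : ℂ} (hp0 : p ≠ 0) : thetaJ p (p ^ 5) =
    qPochInf p (p ^ 5) * qPochInf (p ^ 4) (p ^ 5) := by
  rw [thetaJ, show p ^ 5 / p = p ^ 4 by field_simp]

lemma thetaJ_sq_eq_qPochInf {p : ℂ} (hp0 : p ≠ 0) : thetaJ (p ^ 2) (p ^ 5) =
    qPochInf (p ^ 2) (p ^ 5) * qPochInf (p ^ 3) (p ^ 5) := by
  rw [thetaJ, show p ^ 5 / p ^ 2 = p ^ 3 by field_simp]

lemma zeta5_pow : zeta5 ^ 5 = 1 := by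
  rw [zeta5, ← Complex.exp_nat_mul, Complex.exp_eq_one_iff]
  exact ⟨1, by push_cast; ring⟩

lemma zeta5_sum : 1 + zeta5 + zeta5 ^ 2 + zeta5 ^ 3 + zeta5 ^ 4 = 0 := by
  have h1 : zeta5 - 1 ≠ 0 := by
    have h := (Complex.isPrimitiveRoot_exp 5 (by norm_num)).ne_one (by norm_num)
    rwa [Nat.cast_ofNat, ← zeta5, ← sub_ne_zero] at h
  refine (mul_eq_zero.1 (?_ : (zeta5 - 1) * _ = 0)).resolve_left h1
  linear_combination zeta5_pow

lemma norm_zeta5 : ‖zeta5‖ = 1 :=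
  Complex.norm_eq_one_of_pow_eq_one zeta5_pow (by norm_num)

lemma rankGF_zero (z : ℂ) : rankGF z 0 = 1 := by
  rw [rankGF, tsum_eq_single 0 (fun n hn => by simp [hn])]
  simp [partitionRank]

lemma phiRam_zero : phiRam 0 = 0 := by
  rw [phiRam, tsum_eq_single 0 (fun n hn => by simp [hn])]
  simp [qPochN]

end Assembly

/-- Ramanujan's Lost Notebook mod-5 rank identity. -/
theorem ramanujan_mod_five_rank_identity (q : ℂ) (hq : ‖q‖ < 1) :
    rankGF zeta5 q =
      Aram (q ^ 5) + (zeta5 + zeta5⁻¹ - 2) * phiRam (q ^ 5) + q * Bram (q ^ 5) +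
        (zeta5 + zeta5⁻¹) * q ^ 2 * Cram (q ^ 5) -
        (zeta5 + zeta5⁻¹) * q ^ 3 *
          (Dram (q ^ 5) - (zeta5 ^ 2 + zeta5 ^ (-2 : ℤ) - 2) * psiRam (q ^ 5) / q ^ 5) := by
  rcases eq_or_ne q 0 with rfl | hq0
  · simp [rankGF_zero, phiRam_zero, Aram, qPochInf_zero_left]
  have h5 := zeta5_pow
  have hζ := zeta5_sum
  have hζ0 : zeta5 ≠ 0 := by
    intro h
    simp [h] at h5
  have i1 : zeta5⁻¹ = zeta5 ^ 4 := by field_simp; rw [h5]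
  have i2 : zeta5 ^ (-2 : ℤ) = zeta5 ^ 3 := by
    rw [zpow_neg, show (2 : ℤ) = ((2 : ℕ) : ℤ) by rfl, zpow_natCast]
    field_simp
    rw [h5]
  have hp := norm_pow_lt_one hq (n := 5) (by norm_num)
  have hp0 : q ^ 5 ≠ 0 := pow_ne_zero 5 hq0
  have h1 := thetaJ_pow_ne_zero hq hq0 (r := 5) (by norm_num) (by norm_num)
  have h2 := thetaJ_pow_ne_zero hq hq0 (r := 10) (by norm_num) (by norm_num)
  have hR : rankGF zeta5 q = rankR zeta5 q := rankGF_eq_Ehat norm_zeta5 hq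
  rw [hR, rankR_eq hq hq0 hζ, phiRam_eq hp hp0, psiRam_eq hp hp0, i1, i2]
  simp only [Aram, Bram, Cram, Dram]
  rw [← thetaJ_eq_qPochInf hp0, ← thetaJ_sq_eq_qPochInf hp0]
  simp only [← pow_mul]
  norm_num
  generalize Ehat (q ^ 5) (q ^ 25) = E1
  generalize Ehat (q ^ 10) (q ^ 25) = E2
  generalize thetaJ (q ^ 5) (q ^ 25) = j1 at *
  generalize thetaJ (q ^ 10) (q ^ 25) = j2 at *
  generalize qPochInf (q ^ 25) (q ^ 25) = P
  have hu : (zeta5 + zeta5 ^ 4) * (zeta5 ^ 2 + zeta5 ^ 3 - 2) = -1 - 2 * (zeta5 + zeta5 ^ 4) := by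
    linear_combination (zeta5 ^ 3 + 1 - zeta5) * hζ
  field_simp
  linear_combination (-(j1 ^ 2 * j2 * (E2 - j2))) * hu
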